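/- In the antithetic Milstein setting, let P : ℝ^d → ℝ be twice continuously differentiable with uniformly bounded first and second derivatives. Then there exists a constant K, independent of N, such that for every N ≥ 1 (with Δt = T/N), the multilevel correction variance satisfies Var[ (1/2)(P(X^f_N) + P(X^a_N)) − P(X^c_N) ] ≤ K · Δt². -/

import Mathlib

open MeasureTheory ProbabilityTheory

/-- `h_{ijk}(x) = ½ ∑_l g_{lj}(x) ∂g_{ik}/∂x_l (x)`. -/
noncomputable def milsteinH {d m : ℕ} (g : (Fin d → ℝ) → Fin d → Fin m → ℝ)
    (x : Fin d → ℝ) (i : Fin d) (j k : Fin m) : ℝ :=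
  1 / 2 * ∑ l : Fin d, g x l j * fderiv ℝ (fun y => g y i k) x (Pi.single l 1)

/-- One step of the Milstein scheme with the Lévy areas omitted:
`x_i ↦ x_i + f_i(x) dt + ∑_j g_{ij}(x) dw_j + ∑_{j,k} h_{ijk}(x)(dw_j dw_k − δ_{jk} dt)`. -/
noncomputable def milsteinStep {d m : ℕ} (f : (Fin d → ℝ) → Fin d → ℝ)
    (g : (Fin d → ℝ) → Fin d → Fin m → ℝ) (dt : ℝ)
    (x : Fin d → ℝ) (dw : Fin m → ℝ) : Fin d → ℝ :=
  fun i => x i + f x i * dt + (∑ j : Fin m, g x i j * dw j)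
    + ∑ j : Fin m, ∑ k : Fin m,
        milsteinH g x i j k * (dw j * dw k - if j = k then dt else 0)

/-!
Write `Δt = η²` and rescale the Brownian increments to standard size. One coarse step of the triple
(fine, antithetic, coarse) then changes each of the differences fine − antithetic and
midpoint − coarse by a drift `η² r` plus a centred fluctuation `η z`. Averaging the fine and the
antithetic steps symmetrizes the increments of the two halves of the step, so the antisymmetric
quadratic term, which is what the omitted Lévy areas would have contributed, cancels; the midpoint
is thereby closer to the coarse path than the fine path is, by a factor of order `η`.

The Lyapunov function collecting the fourth moments of the paths and of fine − antithetic with the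
second moment of midpoint − coarse, scaled to make each part of the same order, therefore grows by a
factor at most `1 + K η²` in mean over one step. Independence of the increments iterates this to
`exp (K T)`, and a Taylor expansion of the payoff about the midpoint converts it into the variance
bound.
-/

namespace AntitheticMilstein

section BoundedDerivatives

variable {E F : Type*} [NormedAddCommGroup E] [NormedSpace ℝ E] [NormedAddCommGroup F]
  [NormedSpace ℝ F]

/-- `φ` is twice continuously differentiable and its first two derivatives are bounded by `C`. -/
structure HasBoundedDerivs (φ : E → F) (C : ℝ) : Prop where
  contDiff : ContDiff ℝ 2 φ
  norm_fderiv_le (x : E) : ‖fderiv ℝ φ x‖ ≤ C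
  norm_iteratedFDeriv_two_le (x : E) : ‖iteratedFDeriv ℝ 2 φ x‖ ≤ C

namespace HasBoundedDerivs

variable {φ : E → F} {C C' : ℝ}

lemma nonneg (h : HasBoundedDerivs φ C) : 0 ≤ C :=
  (norm_nonneg _).trans (h.norm_fderiv_le 0)

lemma mono (h : HasBoundedDerivs φ C) (hC : C ≤ C') : HasBoundedDerivs φ C' where
  contDiff := h.contDiff
  norm_fderiv_le x := (h.norm_fderiv_le x).trans hC
  norm_iteratedFDeriv_two_le x := (h.norm_iteratedFDeriv_two_le x).trans hC

lemma differentiableAt (h : HasBoundedDerivs φ C) (x : E) : DifferentiableAt ℝ φ x :=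
  h.contDiff.differentiable two_ne_zero x

lemma norm_sub_le (h : HasBoundedDerivs φ C) (x y : E) : ‖φ x - φ y‖ ≤ C * ‖x - y‖ :=
  convex_univ.norm_image_sub_le_of_norm_fderiv_le (𝕜 := ℝ) (fun x _ => h.differentiableAt x)
    (fun x _ => h.norm_fderiv_le x) (Set.mem_univ y) (Set.mem_univ x)

lemma norm_fderiv_sub_le (h : HasBoundedDerivs φ C) (x y : E) :
    ‖fderiv ℝ φ x - fderiv ℝ φ y‖ ≤ C * ‖x - y‖ := by
  have hd : ContDiff ℝ 1 (fderiv ℝ φ) := h.contDiff.fderiv_right (by norm_num)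
  refine convex_univ.norm_image_sub_le_of_norm_fderiv_le (𝕜 := ℝ)
    (fun x _ => hd.differentiable one_ne_zero x) (fun x _ => ?_) (Set.mem_univ y) (Set.mem_univ x)
  rw [← norm_iteratedFDeriv_one, norm_iteratedFDeriv_fderiv]
  exact h.norm_iteratedFDeriv_two_le x

lemma norm_fderiv_apply_le (h : HasBoundedDerivs φ C) (x v : E) :
    ‖fderiv ℝ φ x v‖ ≤ C * ‖v‖ :=
  (fderiv ℝ φ x).le_of_opNorm_le (h.norm_fderiv_le x) v

lemma norm_taylor_le (h : HasBoundedDerivs φ C) (x y : E) :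
    ‖φ y - φ x - fderiv ℝ φ x (y - x)‖ ≤ C * ‖y - x‖ ^ 2 := by
  have hball : ∀ w ∈ Metric.closedBall x ‖y - x‖,
      ‖fderiv ℝ φ w - fderiv ℝ φ x‖ ≤ C * ‖y - x‖ := fun w hw =>
    (h.norm_fderiv_sub_le w x).trans
      (mul_le_mul_of_nonneg_left (mem_closedBall_iff_norm.1 hw) h.nonneg)
  rw [sq, ← mul_assoc]
  exact (convex_closedBall x ‖y - x‖).norm_image_sub_le_of_norm_fderiv_le' (𝕜 := ℝ)
    (fun w _ => h.differentiableAt w) hball (Metric.mem_closedBall_self (norm_nonneg _))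
    (mem_closedBall_iff_norm.2 le_rfl)

lemma norm_le_of_norm_zero_le (h : HasBoundedDerivs φ C) (h₀ : ‖φ 0‖ ≤ C) (x : E) :
    ‖φ x‖ ≤ C * (1 + ‖x‖) := by
  have hx := h.norm_sub_le x 0
  rw [sub_zero] at hx
  linarith [norm_le_norm_sub_add (φ x) (φ 0)]

lemma norm_midpoint_sub_le (h : HasBoundedDerivs φ C) (x y : E) :
    ‖(1 / 2 : ℝ) • (φ x + φ y) - φ ((1 / 2 : ℝ) • (x + y))‖ ≤ C * ‖x - y‖ ^ 2 := by
  set p := (1 / 2 : ℝ) • (x + y) with hp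
  have hxp : x - p = (1 / 2 : ℝ) • (x - y) := by rw [hp]; module
  have hyp : y - p = -(x - p) := by rw [hp]; module
  have hsum : (1 / 2 : ℝ) • (φ x + φ y) - φ p =
      (1 / 2 : ℝ) • ((φ x - φ p - fderiv ℝ φ p (x - p)) +
        (φ y - φ p - fderiv ℝ φ p (y - p))) := by
    rw [hyp, map_neg]; module
  have hx := h.norm_taylor_le p x
  have hy := h.norm_taylor_le p y
  rw [show ‖y - p‖ = ‖x - p‖ by rw [hyp, norm_neg]] at hy
  have hhalf : ‖x - p‖ ≤ ‖x - y‖ := by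
    rw [hxp, norm_smul]; norm_num; linarith [norm_nonneg (x - y)]
  calc _ ≤ 1 / 2 * (C * ‖x - p‖ ^ 2 + C * ‖x - p‖ ^ 2) := by
        rw [hsum, norm_smul, Real.norm_of_nonneg (by norm_num)]
        gcongr
        exact norm_add_le_of_le hx hy
    _ = C * ‖x - p‖ ^ 2 := by ring
    _ ≤ C * ‖x - y‖ ^ 2 := by have := h.nonneg; gcongr

lemma norm_midpoint_sub_le_add (h : HasBoundedDerivs φ C) (x y z : E) :
    ‖(1 / 2 : ℝ) • (φ x + φ y) - φ z‖ ≤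
      C * (‖x - y‖ ^ 2 + ‖(1 / 2 : ℝ) • (x + y) - z‖) := by
  rw [mul_add]
  exact (norm_sub_le_norm_sub_add_norm_sub _ _ _).trans
    (add_le_add (h.norm_midpoint_sub_le x y) (h.norm_sub_le _ z))

end HasBoundedDerivs

end BoundedDerivatives

section Coefficients

variable {d m : ℕ} {f : (Fin d → ℝ) → Fin d → ℝ} {g : (Fin d → ℝ) → Fin d → Fin m → ℝ} {C : ℝ}

lemma norm_column_le {ι κ : Type*} [Fintype ι] [Fintype κ] (b : ι → κ → ℝ) (k : κ) :
    ‖fun i => b i k‖ ≤ ‖b‖ :=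
  (pi_norm_le_iff_of_nonneg (norm_nonneg b)).2 fun i =>
    (norm_le_pi_norm (b i) k).trans (norm_le_pi_norm b i)

lemma norm_pi_three_le {ι κ κ' : Type*} [Fintype ι] [Fintype κ] [Fintype κ']
    {c : ι → κ → κ' → ℝ} {r : ℝ} (hr : 0 ≤ r) (h : ∀ i j k, ‖c i j k‖ ≤ r) : ‖c‖ ≤ r := by
  simpa only [pi_norm_le_iff_of_nonneg hr] using h

lemma milsteinH_eq_fderiv {x : Fin d → ℝ} (hg : DifferentiableAt ℝ g x) (i : Fin d)
    (j k : Fin m) :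
    milsteinH g x i j k = 1 / 2 * fderiv ℝ g x (fun l => g x l j) i k := by
  have hi : DifferentiableAt ℝ (fun y => g y i) x := differentiableAt_pi.1 hg i
  have hentry : fderiv ℝ (fun y => g y i k) x =
      (ContinuousLinearMap.proj k).comp ((ContinuousLinearMap.proj i).comp (fderiv ℝ g x)) := by
    rw [← fderiv_apply hg i, ← fderiv_apply hi k]
  have hcol : (fun l => g x l j) = ∑ l, g x l j • (Pi.single l 1 : Fin d → ℝ) := by
    funext l
    simp [Finset.sum_apply, Pi.single_apply]
  rw [milsteinH, hentry, hcol, map_sum]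
  simp [Finset.sum_apply]

lemma fderiv_diffusion_apply {x : Fin d → ℝ} (hg : DifferentiableAt ℝ g x) (v : Fin m → ℝ)
    (i : Fin d) (k : Fin m) :
    fderiv ℝ g x (fun l => ∑ j, g x l j * v j) i k = 2 * ∑ j, milsteinH g x i j k * v j := by
  have hsum : (fun l => ∑ j, g x l j * v j) = ∑ j, v j • fun l => g x l j := by
    funext l
    simp [Finset.sum_apply, mul_comm]
  rw [hsum, map_sum, Finset.sum_apply, Finset.sum_apply, Finset.mul_sum]
  refine Finset.sum_congr rfl fun j _ => ?_
  rw [milsteinH_eq_fderiv hg, map_smul]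
  simp only [Pi.smul_apply, smul_eq_mul]
  ring

lemma norm_milsteinH_le (hg : HasBoundedDerivs g C) (hg₀ : ‖g 0‖ ≤ C) (x : Fin d → ℝ) :
    ‖milsteinH g x‖ ≤ C ^ 2 * (1 + ‖x‖) := by
  refine norm_pi_three_le (by positivity) fun i j k => ?_
  have hC := hg.nonneg
  calc ‖milsteinH g x i j k‖
      = 1 / 2 * ‖fderiv ℝ g x (fun l => g x l j) i k‖ := by
        rw [milsteinH_eq_fderiv (hg.differentiableAt x), norm_mul,
          Real.norm_of_nonneg (by norm_num)]
    _ ≤ 1 / 2 * (C * (C * (1 + ‖x‖))) := by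
        gcongr
        exact (norm_le_pi_norm _ k).trans <| (norm_le_pi_norm _ i).trans <|
          (hg.norm_fderiv_apply_le x _).trans <| mul_le_mul_of_nonneg_left
            ((norm_column_le _ j).trans (hg.norm_le_of_norm_zero_le hg₀ x)) hC
    _ ≤ C ^ 2 * (1 + ‖x‖) := by nlinarith [mul_nonneg (sq_nonneg C) (norm_nonneg x), sq_nonneg C]

lemma norm_milsteinH_sub_le (hg : HasBoundedDerivs g C) (hg₀ : ‖g 0‖ ≤ C) (x y : Fin d → ℝ) :
    ‖milsteinH g x - milsteinH g y‖ ≤ C ^ 2 * (1 + ‖x‖) * ‖x - y‖ := by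
  refine norm_pi_three_le (by positivity) fun i j k => ?_
  have hC := hg.nonneg
  have hsplit : milsteinH g x i j k - milsteinH g y i j k =
      1 / 2 * ((fderiv ℝ g x - fderiv ℝ g y) (fun l => g x l j) +
        fderiv ℝ g y (fun l => (g x - g y) l j)) i k := by
    have hcol : (fun l => (g x - g y) l j) = (fun l => g x l j) - fun l => g y l j := rfl
    rw [milsteinH_eq_fderiv (hg.differentiableAt x), milsteinH_eq_fderiv (hg.differentiableAt y),
      hcol, map_sub]
    simp only [sub_apply, Pi.add_apply, Pi.sub_apply]
    ring
  have hvar : ‖(fderiv ℝ g x - fderiv ℝ g y) (fun l => g x l j)‖ ≤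
      C * ‖x - y‖ * (C * (1 + ‖x‖)) :=
    (ContinuousLinearMap.le_of_opNorm_le _ (hg.norm_fderiv_sub_le x y) _).trans <|
      mul_le_mul_of_nonneg_left ((norm_column_le _ j).trans (hg.norm_le_of_norm_zero_le hg₀ x))
        (by positivity)
  have hcol : ‖fderiv ℝ g y (fun l => (g x - g y) l j)‖ ≤ C * (C * ‖x - y‖) :=
    (hg.norm_fderiv_apply_le y _).trans <| mul_le_mul_of_nonneg_left
      ((norm_column_le _ j).trans (hg.norm_sub_le x y)) hC
  calc ‖milsteinH g x i j k - milsteinH g y i j k‖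
      ≤ 1 / 2 * (C * ‖x - y‖ * (C * (1 + ‖x‖)) + C * (C * ‖x - y‖)) := by
        rw [hsplit, norm_mul, Real.norm_of_nonneg (by norm_num)]
        gcongr
        exact (norm_le_pi_norm _ k).trans <| (norm_le_pi_norm _ i).trans <|
          norm_add_le_of_le hvar hcol
    _ ≤ C ^ 2 * (1 + ‖x‖) * ‖x - y‖ := by
        nlinarith [mul_nonneg (mul_nonneg (sq_nonneg C) (norm_nonneg x)) (norm_nonneg (x - y))]

end Coefficients

section DriftMartingale

variable {Θ G : Type*} [MeasurableSpace Θ] [NormedAddCommGroup G] [NormedSpace ℝ G]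
  {ν : Measure Θ} {w : Θ → ℝ} {η A B : ℝ} {u v : Θ → G}

/-- The random variable `u` is the sum of a drift `η² r` and a centred term `η z`, where `r` and
`z` are dominated by `A w`: the size of an increment of a diffusion over a time step `η²`. -/
def IsDriftMartingale (ν : Measure Θ) (w : Θ → ℝ) (η A : ℝ) (u : Θ → G) : Prop :=
  ∃ r z : Θ → G, AEStronglyMeasurable r ν ∧ AEStronglyMeasurable z ν ∧
    (∀ θ, ‖r θ‖ ≤ A * w θ) ∧ (∀ θ, ‖z θ‖ ≤ A * w θ) ∧ ∫ θ, z θ ∂ν = 0 ∧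
    ∀ θ, u θ = η ^ 2 • r θ + η • z θ

/-- The real random variable `u` is integrable, with mean at most `c`. -/
def MeanLE (ν : Measure Θ) (u : Θ → ℝ) (c : ℝ) : Prop :=
  Integrable u ν ∧ ∫ θ, u θ ∂ν ≤ c

namespace MeanLE

variable {u v : Θ → ℝ} {a b : ℝ}

lemma mono (hu : MeanLE ν u a) (hab : a ≤ b) : MeanLE ν u b :=
  ⟨hu.1, hu.2.trans hab⟩

lemma const [IsProbabilityMeasure ν] (c : ℝ) : MeanLE ν (fun _ => c) c :=
  ⟨integrable_const c, by simp⟩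

lemma add (hu : MeanLE ν u a) (hv : MeanLE ν v b) : MeanLE ν (fun θ => u θ + v θ) (a + b) :=
  ⟨hu.1.add hv.1, (integral_add hu.1 hv.1).trans_le (add_le_add hu.2 hv.2)⟩

lemma const_mul {c : ℝ} (hc : 0 ≤ c) (hu : MeanLE ν u a) :
    MeanLE ν (fun θ => c * u θ) (c * a) :=
  ⟨hu.1.const_mul c,
    (integral_const_mul c u).trans_le (mul_le_mul_of_nonneg_left hu.2 hc)⟩

lemma sum {ι : Type*} [Fintype ι] {u : ι → Θ → ℝ} {a : ι → ℝ} (hu : ∀ i, MeanLE ν (u i) (a i)) :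
    MeanLE ν (fun θ => ∑ i, u i θ) (∑ i, a i) :=
  ⟨integrable_finsetSum _ fun i _ => (hu i).1,
    (integral_finsetSum _ fun i _ => (hu i).1).trans_le (Finset.sum_le_sum fun i _ => (hu i).2)⟩

end MeanLE

namespace IsDriftMartingale

lemma of_drift {r : Θ → G} (hr : AEStronglyMeasurable r ν) (hA : ∀ θ, ‖r θ‖ ≤ A * w θ) :
    IsDriftMartingale ν w η A fun θ => η ^ 2 • r θ :=
  ⟨r, 0, hr, aestronglyMeasurable_zero, hA,
    fun θ => by simpa using (norm_nonneg _).trans (hA θ), by simp, by simp⟩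

lemma of_martingale {z : Θ → G} (hz : AEStronglyMeasurable z ν) (hA : ∀ θ, ‖z θ‖ ≤ A * w θ)
    (hmean : ∫ θ, z θ ∂ν = 0) : IsDriftMartingale ν w η A fun θ => η • z θ :=
  ⟨0, z, aestronglyMeasurable_zero, hz,
    fun θ => by simpa using (norm_nonneg _).trans (hA θ), hA, hmean, by simp⟩

lemma mono (hw : ∀ θ, 0 ≤ w θ) (hu : IsDriftMartingale ν w η A u) (hAB : A ≤ B) :
    IsDriftMartingale ν w η B u := by
  obtain ⟨r, z, hr, hz, hrA, hzA, hmean, hsplit⟩ := hu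
  have hmul : ∀ θ, A * w θ ≤ B * w θ := fun θ => mul_le_mul_of_nonneg_right hAB (hw θ)
  exact ⟨r, z, hr, hz, fun θ => (hrA θ).trans (hmul θ), fun θ => (hzA θ).trans (hmul θ), hmean,
    hsplit⟩

lemma add (hw : Integrable w ν) (hu : IsDriftMartingale ν w η A u)
    (hv : IsDriftMartingale ν w η B v) : IsDriftMartingale ν w η (A + B) fun θ => u θ + v θ := by
  obtain ⟨r, z, hr, hz, hrA, hzA, hmean, hsplit⟩ := hu
  obtain ⟨r', z', hr', hz', hrB, hzB, hmean', hsplit'⟩ := hv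
  have hzint : Integrable z ν := (hw.const_mul A).mono' hz (.of_forall hzA)
  have hzint' : Integrable z' ν := (hw.const_mul B).mono' hz' (.of_forall hzB)
  refine ⟨r + r', z + z', hr.add hr', hz.add hz',
    fun θ => (add_mul A B (w θ)).symm ▸ norm_add_le_of_le (hrA θ) (hrB θ),
    fun θ => (add_mul A B (w θ)).symm ▸ norm_add_le_of_le (hzA θ) (hzB θ), ?_, fun θ => ?_⟩
  · simp only [Pi.add_apply]
    rw [integral_add hzint hzint', hmean, hmean', add_zero]
  · simp only [hsplit, hsplit', Pi.add_apply]
    module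

lemma comp_measurePreserving {τ : Θ → Θ} (hu : IsDriftMartingale ν w η A u)
    (hτ : MeasurePreserving τ ν ν) (hw : ∀ θ, w (τ θ) = w θ) :
    IsDriftMartingale ν w η A (u ∘ τ) := by
  obtain ⟨r, z, hr, hz, hrA, hzA, hmean, hsplit⟩ := hu
  refine ⟨r ∘ τ, z ∘ τ, hr.comp_measurePreserving hτ, hz.comp_measurePreserving hτ,
    fun θ => hw θ ▸ hrA (τ θ), fun θ => hw θ ▸ hzA (τ θ), ?_, fun θ => hsplit (τ θ)⟩
  rw [← hmean]
  conv_rhs => rw [← hτ.map_eq]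
  exact (integral_map hτ.aemeasurable (hτ.map_eq.symm ▸ hz)).symm

lemma apply {ι : Type*} [Fintype ι] {u : Θ → ι → ℝ} (hw : Integrable w ν)
    (hu : IsDriftMartingale ν w η A u) (i : ι) :
    IsDriftMartingale ν w η A fun θ => u θ i := by
  obtain ⟨r, z, hr, hz, hrA, hzA, hmean, hsplit⟩ := hu
  have hzint : Integrable z ν := (hw.const_mul A).mono' hz (.of_forall hzA)
  refine ⟨fun θ => r θ i, fun θ => z θ i, (continuous_apply i).comp_aestronglyMeasurable hr,
    (continuous_apply i).comp_aestronglyMeasurable hz,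
    fun θ => (norm_le_pi_norm (r θ) i).trans (hrA θ),
    fun θ => (norm_le_pi_norm (z θ) i).trans (hzA θ), ?_, fun θ => by simp [hsplit]⟩
  rw [← eval_integral fun i => hzint.eval i, hmean, Pi.zero_apply]

lemma meanLE {u : Θ → ℝ} (hw : Integrable w ν) (hu : IsDriftMartingale ν w η A u) :
    MeanLE ν u (η ^ 2 * (A * ∫ θ, w θ ∂ν)) := by
  obtain ⟨r, z, hr, hz, hrA, hzA, hmean, hsplit⟩ := hu
  have hrint : Integrable r ν := (hw.const_mul A).mono' hr (.of_forall hrA)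
  have hzint : Integrable z ν := (hw.const_mul A).mono' hz (.of_forall hzA)
  have hu : u = fun θ => η ^ 2 * r θ + η * z θ := funext hsplit
  refine ⟨hu ▸ (hrint.const_mul _).add (hzint.const_mul _), ?_⟩
  calc ∫ θ, u θ ∂ν = η ^ 2 * ∫ θ, r θ ∂ν := by
        rw [hu, integral_add (hrint.const_mul _) (hzint.const_mul _), integral_const_mul,
          integral_const_mul, hmean, mul_zero, add_zero]
    _ ≤ η ^ 2 * ∫ θ, A * w θ ∂ν := by
        gcongr
        · exact hw.const_mul A
        · exact fun θ => (le_abs_self _).trans (hrA θ)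
    _ = η ^ 2 * (A * ∫ θ, w θ ∂ν) := by rw [integral_const_mul]

/- Squaring turns a split into a split, so fourth moments are second moments of squares. -/
lemma add_sq_sub_sq {u : Θ → ℝ} (hη : 0 ≤ η) (hA : 0 ≤ A) (hw : ∀ θ, 1 ≤ w θ)
    (hu : IsDriftMartingale ν w η A u) (D : ℝ) :
    IsDriftMartingale ν (fun θ => w θ ^ 2) η (2 * |D| * A + (η + 1) ^ 2 * A ^ 2)
      fun θ => (D + u θ) ^ 2 - D ^ 2 := by
  obtain ⟨r, z, hr, hz, hrA, hzA, hmean, hsplit⟩ := hu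
  have hlinear : ∀ y θ, |y| ≤ A * w θ → |2 * D * y| ≤ 2 * |D| * A * w θ ^ 2 := fun y θ hy => by
    have hww : w θ ≤ w θ ^ 2 := le_self_pow₀ (hw θ) two_ne_zero
    calc |2 * D * y| = 2 * |D| * |y| := by rw [abs_mul, abs_mul, abs_two]
      _ ≤ 2 * |D| * (A * w θ ^ 2) := by gcongr; exact hy.trans (by gcongr)
      _ = 2 * |D| * A * w θ ^ 2 := by ring
  have hquadratic : ∀ θ, |(η * r θ + z θ) ^ 2| ≤ (η + 1) ^ 2 * A ^ 2 * w θ ^ 2 := fun θ => by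
    have hsum : |η * r θ + z θ| ≤ (η + 1) * (A * w θ) := by
      calc |η * r θ + z θ| ≤ η * |r θ| + |z θ| :=
            (abs_add_le _ _).trans_eq (by rw [abs_mul, abs_of_nonneg hη])
        _ ≤ η * (A * w θ) + A * w θ := by gcongr; exacts [hrA θ, hzA θ]
        _ = (η + 1) * (A * w θ) := by ring
    rw [abs_pow, ← mul_pow, ← mul_pow, mul_assoc]
    gcongr
  have hA' : 0 ≤ (η + 1) ^ 2 * A ^ 2 := by positivity
  refine ⟨fun θ => 2 * D * r θ + (η * r θ + z θ) ^ 2, fun θ => 2 * D * z θ,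
    (hr.const_mul _).add (((hr.const_mul _).add hz).pow 2), hz.const_mul _, fun θ => ?_,
    fun θ => ?_, by rw [integral_const_mul, hmean, mul_zero], fun θ => ?_⟩
  · rw [add_mul]
    exact norm_add_le_of_le (hlinear _ θ (hrA θ)) (hquadratic θ)
  · exact (hlinear _ θ (hzA θ)).trans (by gcongr; linarith)
  · simp only [hsplit, smul_eq_mul]
    ring

variable [IsProbabilityMeasure ν]

lemma exists_meanLE_add_sq (hw : ∀ θ, 1 ≤ w θ) (hwint : ∀ k : ℕ, Integrable (fun θ => w θ ^ k) ν)
    (M : ℝ) : ∃ K, 0 ≤ K ∧ ∀ η A D : ℝ, ∀ u : Θ → ℝ, 0 ≤ η → η ≤ M → 0 ≤ A →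
      IsDriftMartingale ν w η A u →
        MeanLE ν (fun θ => (D + u θ) ^ 2) (D ^ 2 + K * η ^ 2 * (D ^ 2 + A ^ 2)) := by
  have : 0 ≤ ∫ θ, w θ ^ 2 ∂ν := integral_nonneg fun θ => sq_nonneg _
  refine ⟨(1 + (M + 1) ^ 2) * ∫ θ, w θ ^ 2 ∂ν, by positivity, fun η A D u hη hηM hA hu => ?_⟩
  have hmean := (MeanLE.const (D ^ 2)).add ((hu.add_sq_sub_sq hη hA hw D).meanLE (hwint 2))
  simp only [add_sub_cancel] at hmean
  have hamgm : 2 * |D| * A ≤ D ^ 2 + A ^ 2 := by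
    simpa only [sq_abs] using two_mul_le_add_sq |D| A
  refine hmean.mono ?_
  calc _ ≤ D ^ 2 + η ^ 2 * ((D ^ 2 + A ^ 2 + (M + 1) ^ 2 * (D ^ 2 + A ^ 2)) *
        ∫ θ, w θ ^ 2 ∂ν) := by gcongr; linarith [sq_nonneg D]
    _ = _ := by ring

lemma exists_meanLE_add_pow_four (hw : ∀ θ, 1 ≤ w θ)
    (hwint : ∀ k : ℕ, Integrable (fun θ => w θ ^ k) ν) (M : ℝ) :
    ∃ K, 0 ≤ K ∧ ∀ η A D : ℝ, ∀ u : Θ → ℝ, 0 ≤ η → η ≤ M → 0 ≤ A →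
      IsDriftMartingale ν w η A u →
        MeanLE ν (fun θ => (D + u θ) ^ 4) (D ^ 4 + K * η ^ 2 * (D ^ 4 + A ^ 4)) := by
  obtain ⟨K, hK, hsq⟩ := exists_meanLE_add_sq (ν := ν) (w := fun θ => w θ ^ 2)
    (fun θ => one_le_pow₀ (hw θ)) (fun k => by simpa only [← pow_mul] using hwint (2 * k)) M
  set b := 1 + (M + 1) ^ 2 with hb
  refine ⟨K * (1 + 2 * b ^ 2), by positivity, fun η A D u hη hηM hA hu => ?_⟩
  set A' := 2 * |D| * A + (η + 1) ^ 2 * A ^ 2 with hA'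
  have hmean := hsq η A' (D ^ 2) _ hη hηM (by positivity) (hu.add_sq_sub_sq hη hA hw D)
  simp only [add_sub_cancel, ← pow_mul] at hmean
  have hA'_le : A' ≤ b * (D ^ 2 + A ^ 2) := by
    have hamgm : 2 * |D| * A ≤ D ^ 2 + A ^ 2 := by
      simpa only [sq_abs] using two_mul_le_add_sq |D| A
    calc A' ≤ D ^ 2 + A ^ 2 + (M + 1) ^ 2 * (D ^ 2 + A ^ 2) := by
          rw [hA']; gcongr; linarith [sq_nonneg D]
      _ = b * (D ^ 2 + A ^ 2) := by rw [hb]; ring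
  refine hmean.mono ?_
  calc _ ≤ D ^ 4 + K * η ^ 2 * (D ^ 4 + (b * (D ^ 2 + A ^ 2)) ^ 2) := by norm_num; gcongr
    _ ≤ D ^ 4 + K * η ^ 2 * (D ^ 4 + A ^ 4 + 2 * b ^ 2 * (D ^ 4 + A ^ 4)) := by
        gcongr D ^ 4 + K * η ^ 2 * ?_
        have hsq_add := mul_le_mul_of_nonneg_left (add_sq_le (a := D ^ 2) (b := A ^ 2))
          (sq_nonneg b)
        linear_combination hsq_add + pow_nonneg hA 4
    _ = _ := by ring

end IsDriftMartingale

end DriftMartingale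

section PowerSum

variable {Θ ι : Type*} [MeasurableSpace Θ] [Fintype ι] {ν : Measure Θ} {w : Θ → ℝ}

/-- The sum of the `p`-th powers of the coordinates; for even `p ≠ 0` it is comparable to the
`p`-th power of the norm. -/
def powSum (p : ℕ) (v : ι → ℝ) : ℝ := ∑ i, v i ^ p

lemma powSum_nonneg {p : ℕ} (hp : Even p) (v : ι → ℝ) : 0 ≤ powSum p v :=
  Finset.sum_nonneg fun _ _ => hp.pow_nonneg _

lemma norm_pow_le_powSum {p : ℕ} (hp : Even p) (hp₀ : p ≠ 0) (v : ι → ℝ) :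
    ‖v‖ ^ p ≤ powSum p v := by
  rcases isEmpty_or_nonempty ι with _ | _
  · simp [Subsingleton.elim v 0, hp₀, powSum]
  · obtain ⟨i, hi⟩ := Finite.exists_max fun i => ‖v i‖
    have hnorm : ‖v‖ = ‖v i‖ :=
      le_antisymm ((pi_norm_le_iff_of_nonempty _).2 hi) (norm_le_pi_norm v i)
    rw [hnorm, Real.norm_eq_abs, hp.pow_abs]
    exact Finset.single_le_sum (f := fun i => v i ^ p) (fun _ _ => hp.pow_nonneg _)
      (Finset.mem_univ i)

lemma continuous_powSum (p : ℕ) : Continuous (powSum p : (ι → ℝ) → ℝ) :=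
  continuous_finsetSum _ fun i _ => (continuous_apply i).pow p

lemma exists_meanLE_powSum_add [IsProbabilityMeasure ν] (hw : ∀ θ, 1 ≤ w θ)
    (hwint : ∀ k : ℕ, Integrable (fun θ => w θ ^ k) ν) (M : ℝ) {p : ℕ} (hp : p = 2 ∨ p = 4) :
    ∃ K, 0 ≤ K ∧ ∀ η A : ℝ, ∀ (D : ι → ℝ) (u : Θ → ι → ℝ), 0 ≤ η → η ≤ M → 0 ≤ A →
      IsDriftMartingale ν w η A u →
        MeanLE ν (fun θ => powSum p (D + u θ)) (powSum p D + K * η ^ 2 * (powSum p D + A ^ p)) := by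
  obtain ⟨K, hK, hmoment⟩ : ∃ K, 0 ≤ K ∧ ∀ η A D : ℝ, ∀ u : Θ → ℝ, 0 ≤ η → η ≤ M → 0 ≤ A →
      IsDriftMartingale ν w η A u →
        MeanLE ν (fun θ => (D + u θ) ^ p) (D ^ p + K * η ^ 2 * (D ^ p + A ^ p)) := by
    rcases hp with rfl | rfl
    exacts [IsDriftMartingale.exists_meanLE_add_sq hw hwint M,
      IsDriftMartingale.exists_meanLE_add_pow_four hw hwint M]
  have hpeven : Even p := by rcases hp with rfl | rfl <;> decide
  have hwint₁ : Integrable w ν := by simpa only [pow_one] using hwint 1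
  refine ⟨K * (1 + Fintype.card ι), by positivity, fun η A D u hη hηM hA hu => ?_⟩
  refine (MeanLE.sum fun i => hmoment η A (D i) _ hη hηM hA (hu.apply hwint₁ i)).mono ?_
  have hD := powSum_nonneg hpeven D
  have hsum : ∑ i, (D i ^ p + K * η ^ 2 * (D i ^ p + A ^ p)) =
      powSum p D + K * η ^ 2 * (powSum p D + Fintype.card ι * A ^ p) := by
    simp only [powSum, mul_add, Finset.sum_add_distrib, Finset.mul_sum, Finset.sum_const,
      Finset.card_univ, nsmul_eq_mul]
    ring
  have hle : powSum p D + Fintype.card ι * A ^ p ≤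
      (1 + Fintype.card ι) * (powSum p D + A ^ p) := by
    linear_combination pow_nonneg hA p + mul_nonneg (Nat.cast_nonneg (α := ℝ) (Fintype.card ι)) hD
  rw [hsum]
  linear_combination K * η ^ 2 * hle

end PowerSum

section Noise

variable {m : ℕ}

/-- `γ` has the moments used of a Brownian increment over half of a time step of length one: all
of them are finite, the mean is `0` and the covariance matrix is `1 / 2`. -/
structure IsHalfStepNoise (γ : Measure (Fin m → ℝ)) : Prop where
  isProbabilityMeasure : IsProbabilityMeasure γ
  integrable_pow (k : ℕ) : Integrable (fun ξ => (1 + ‖ξ‖) ^ k) γ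
  integral_apply (j : Fin m) : ∫ ξ, ξ j ∂γ = 0
  integral_apply_mul_apply (j k : Fin m) : ∫ ξ, ξ j * ξ k ∂γ = if j = k then 1 / 2 else 0

/-- The Gaussian law with independent `N(0, 1 / 2)` coordinates. -/
noncomputable def halfNoise (m : ℕ) : Measure (Fin m → ℝ) :=
  Measure.pi fun _ => gaussianReal 0 (1 / 2)

instance : IsProbabilityMeasure (halfNoise m) :=
  inferInstanceAs (IsProbabilityMeasure (Measure.pi _))

lemma iIndepFun_halfNoise : iIndepFun (fun (j : Fin m) ξ => ξ j) (halfNoise m) :=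
  iIndepFun_pi (X := fun _ => id) fun _ => aemeasurable_id

instance : IsGaussian (halfNoise m) := by
  have hcoord : ∀ j : Fin m, HasGaussianLaw (fun ξ : Fin m → ℝ => ξ j) (halfNoise m) := fun j =>
    ⟨(measurePreserving_eval (fun _ : Fin m => gaussianReal 0 (1 / 2)) j).map_eq.symm ▸
      inferInstance⟩
  have hlaw := (iIndepFun_halfNoise.hasGaussianLaw hcoord).isGaussian_map
  rwa [Measure.map_id'] at hlaw

lemma isHalfStepNoise_halfNoise (m : ℕ) : IsHalfStepNoise (halfNoise m) := by
  have hcoord : ∀ (j : Fin m) (φ : ℝ → ℝ), Continuous φ →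
      ∫ ξ, φ (ξ j) ∂halfNoise m = ∫ t, φ t ∂gaussianReal 0 (1 / 2) := fun j φ hφ =>
    integral_comp_eval hφ.aestronglyMeasurable
  have hmean : ∀ j : Fin m, ∫ ξ, ξ j ∂halfNoise m = 0 := fun j =>
    (hcoord j id continuous_id).trans integral_id_gaussianReal
  refine ⟨inferInstance, fun k => ?_, hmean, fun j k => ?_⟩
  · have hid : MemLp (fun ξ : Fin m → ℝ => ξ) k (halfNoise m) :=
      IsGaussian.memLp_id _ _ (ENNReal.natCast_ne_top k)
    have hpow := ((memLp_const (1 : ℝ)).add hid.norm).integrable_norm_pow'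
    refine hpow.congr (.of_forall fun ξ => ?_)
    simp only [Pi.add_apply]
    rw [Real.norm_of_nonneg (add_nonneg zero_le_one (norm_nonneg ξ))]
  · split_ifs with hjk
    · have hvar := variance_of_integral_eq_zero (X := fun t => t) aemeasurable_id
        (integral_id_gaussianReal (μ := 0) (v := 1 / 2))
      rw [variance_fun_id_gaussianReal] at hvar
      simp only [hjk, ← sq]
      rw [hcoord k (· ^ 2) (continuous_pow 2), ← hvar]
      norm_num
    · rw [(iIndepFun_halfNoise.indepFun hjk).integral_fun_mul_eq_mul_integral
        (measurable_pi_apply j).aestronglyMeasurable (measurable_pi_apply k).aestronglyMeasurable,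
        hmean, zero_mul]

end Noise

section Increment

variable {d m : ℕ}

/-- The coefficients `(a, b, c)` of drift, diffusion and second order noise in one step. -/
abbrev StepCoeff (d m : ℕ) : Type :=
  (Fin d → ℝ) × (Fin d → Fin m → ℝ) × (Fin d → Fin m → Fin m → ℝ)

/-- The centred quadratic noise `∑ⱼ bᵢⱼ ξⱼ + ∑ⱼₖ cᵢⱼₖ (ξⱼ ξₖ - δⱼₖ / 2)`, linear in `(b, c)`. -/
noncomputable def noisePoly (ξ : Fin m → ℝ) :
    (Fin d → Fin m → ℝ) × (Fin d → Fin m → Fin m → ℝ) →ₗ[ℝ] (Fin d → ℝ) where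
  toFun κ i := ∑ j, κ.1 i j * ξ j + ∑ j, ∑ k, κ.2 i j k * (ξ j * ξ k - if j = k then 1 / 2 else 0)
  map_add' κ κ' := by
    ext i
    simp only [Prod.fst_add, Prod.snd_add, Pi.add_apply, add_mul, Finset.sum_add_distrib]
    ring
  map_smul' c κ := by
    ext i
    simp only [Prod.smul_fst, Prod.smul_snd, Pi.smul_apply, smul_eq_mul, mul_assoc,
      ← Finset.mul_sum, RingHom.id_apply]
    ring

/-- The increment `η² a / 2 + η (noise of (b, c))` over half of a time step of length `η²`. -/
noncomputable def stepIncr (η : ℝ) (ξ : Fin m → ℝ) : StepCoeff d m →ₗ[ℝ] (Fin d → ℝ) :=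
  (η ^ 2 / 2) • LinearMap.fst ℝ _ _ + η • noisePoly ξ ∘ₗ LinearMap.snd ℝ _ _

/-- The increment over a full time step, each half of which may have coefficients depending on the
noise of the other half. -/
noncomputable def pairIncr (η : ℝ) (α β : (Fin m → ℝ) → StepCoeff d m)
    (ξ : (Fin m → ℝ) × (Fin m → ℝ)) : Fin d → ℝ :=
  stepIncr η ξ.1 (α ξ.2) + stepIncr η ξ.2 (β ξ.1)

/-- The matrix `(∑ⱼ cᵢⱼₖ ζⱼ)ᵢₖ`. -/
def contract (ζ : Fin m → ℝ) (c : Fin d → Fin m → Fin m → ℝ) : Fin d → Fin m → ℝ :=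
  fun i k => ∑ j, c i j k * ζ j

lemma noisePoly_apply (ξ : Fin m → ℝ)
    (κ : (Fin d → Fin m → ℝ) × (Fin d → Fin m → Fin m → ℝ)) (i : Fin d) :
    noisePoly ξ κ i = ∑ j, κ.1 i j * ξ j +
      ∑ j, ∑ k, κ.2 i j k * (ξ j * ξ k - if j = k then 1 / 2 else 0) := rfl

lemma stepIncr_apply (η : ℝ) (ξ : Fin m → ℝ) (κ : StepCoeff d m) :
    stepIncr η ξ κ = (η ^ 2 / 2) • κ.1 + η • noisePoly ξ κ.2 := rfl

lemma abs_sum_mul_le {ι : Type*} [Fintype ι] (u v : ι → ℝ) {A B : ℝ}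
    (hu : ∀ i, |u i| ≤ A) (hv : ∀ i, |v i| ≤ B) : |∑ i, u i * v i| ≤ Fintype.card ι * (A * B) := by
  have hterm : ∀ i ∈ Finset.univ, ‖u i * v i‖ ≤ A * B := fun i _ => by
    rw [norm_mul]
    exact mul_le_mul (hu i) (hv i) (abs_nonneg _) ((abs_nonneg _).trans (hu i))
  simpa using norm_sum_le_of_le _ hterm

lemma norm_contract_le (ζ : Fin m → ℝ) (c : Fin d → Fin m → Fin m → ℝ) :
    ‖contract ζ c‖ ≤ m * (‖c‖ * ‖ζ‖) := by
  have hr : 0 ≤ m * (‖c‖ * ‖ζ‖) := by positivity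
  refine (pi_norm_le_iff_of_nonneg hr).2 fun i => (pi_norm_le_iff_of_nonneg hr).2 fun k => ?_
  have hentry : ∀ j, |c i j k| ≤ ‖c‖ := fun j =>
    (norm_le_pi_norm (c i j) k).trans <| (norm_le_pi_norm (c i) j).trans <| norm_le_pi_norm c i
  refine (abs_sum_mul_le (fun j => c i j k) ζ hentry (norm_le_pi_norm ζ)).trans_eq ?_
  rw [Fintype.card_fin]

lemma norm_noisePoly_le (ξ : Fin m → ℝ)
    (κ : (Fin d → Fin m → ℝ) × (Fin d → Fin m → Fin m → ℝ)) :
    ‖noisePoly ξ κ‖ ≤ (m + 1) ^ 2 * (1 + ‖ξ‖) ^ 2 * ‖κ‖ := by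
  refine (pi_norm_le_iff_of_nonneg (by positivity)).2 fun i => ?_
  have hξ : ∀ j, |ξ j| ≤ ‖ξ‖ := norm_le_pi_norm ξ
  have hlinear : |∑ j, κ.1 i j * ξ j| ≤ m * (‖κ‖ * ‖ξ‖) := by
    simpa using abs_sum_mul_le (κ.1 i) ξ (fun j => (norm_le_pi_norm (κ.1 i) j).trans <|
      (norm_le_pi_norm κ.1 i).trans (norm_fst_le κ)) hξ
  have hcov : ∀ j k, |ξ j * ξ k - if j = k then 1 / 2 else 0| ≤ ‖ξ‖ ^ 2 + 1 := fun j k => by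
    refine (abs_sub _ _).trans (add_le_add ?_ ?_)
    · rw [abs_mul, sq]
      exact mul_le_mul (hξ j) (hξ k) (abs_nonneg _) (norm_nonneg _)
    · split_ifs <;> norm_num
  have hquadratic : |∑ j, ∑ k, κ.2 i j k * (ξ j * ξ k - if j = k then 1 / 2 else 0)| ≤
      m * m * (‖κ‖ * (‖ξ‖ ^ 2 + 1)) := by
    have := abs_sum_mul_le (ι := Fin m × Fin m) (fun p => κ.2 i p.1 p.2)
      (fun p => ξ p.1 * ξ p.2 - if p.1 = p.2 then 1 / 2 else 0) (A := ‖κ‖)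
      (fun p => (norm_le_pi_norm (κ.2 i p.1) p.2).trans <| (norm_le_pi_norm (κ.2 i) p.1).trans <|
        (norm_le_pi_norm κ.2 i).trans (norm_snd_le κ)) fun p => hcov p.1 p.2
    simpa [Fintype.sum_prod_type] using this
  have hm : (0 : ℝ) ≤ m := m.cast_nonneg
  rw [noisePoly_apply]
  calc _ ≤ m * (‖κ‖ * ‖ξ‖) + m * m * (‖κ‖ * (‖ξ‖ ^ 2 + 1)) :=
        norm_add_le_of_le hlinear hquadratic
    _ = (m * ‖ξ‖ + m * m * (‖ξ‖ ^ 2 + 1)) * ‖κ‖ := by ring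
    _ ≤ (m + 1) ^ 2 * (1 + ‖ξ‖) ^ 2 * ‖κ‖ := by
        gcongr
        nlinarith [norm_nonneg ξ, mul_nonneg hm (norm_nonneg ξ),
          mul_nonneg (mul_nonneg hm hm) (norm_nonneg ξ), mul_nonneg hm (sq_nonneg ‖ξ‖)]

lemma norm_stepIncr_le {η : ℝ} (hη : 0 ≤ η) (ξ : Fin m → ℝ) (κ : StepCoeff d m) :
    ‖stepIncr η ξ κ‖ ≤ η * (η + (m + 1) ^ 2) * (1 + ‖ξ‖) ^ 2 * ‖κ‖ := by
  have hone : 1 ≤ (1 + ‖ξ‖) ^ 2 := one_le_pow₀ (le_add_of_nonneg_right (norm_nonneg ξ))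
  calc ‖stepIncr η ξ κ‖
      ≤ η ^ 2 / 2 * ‖κ.1‖ + η * ‖noisePoly ξ κ.2‖ := by
        refine (norm_add_le _ _).trans_eq ?_
        simp [norm_smul, abs_of_nonneg hη]
    _ ≤ η ^ 2 * (1 + ‖ξ‖) ^ 2 * ‖κ‖ + η * ((m + 1) ^ 2 * (1 + ‖ξ‖) ^ 2 * ‖κ‖) := by
        gcongr
        · nlinarith [sq_nonneg η]
        · exact norm_fst_le κ
        · exact (norm_noisePoly_le ξ κ.2).trans (by gcongr; exact norm_snd_le κ)
    _ = _ := by ring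

lemma continuous_noisePoly : Continuous fun p : (Fin m → ℝ) ×
    ((Fin d → Fin m → ℝ) × (Fin d → Fin m → Fin m → ℝ)) => noisePoly p.1 p.2 := by
  simp only [noisePoly, LinearMap.coe_mk, AddHom.coe_mk]
  fun_prop

lemma continuous_stepIncr (η : ℝ) :
    Continuous fun p : (Fin m → ℝ) × StepCoeff d m => stepIncr η p.1 p.2 := by
  have hnoise : Continuous fun p : (Fin m → ℝ) × StepCoeff d m => noisePoly p.1 p.2.2 :=
    continuous_noisePoly.comp (by fun_prop : Continuous fun p : (Fin m → ℝ) × StepCoeff d m =>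
      (p.1, p.2.2))
  simp only [stepIncr_apply]
  fun_prop

lemma pairIncr_sub (η : ℝ) (α β α' β' : (Fin m → ℝ) → StepCoeff d m)
    (ξ : (Fin m → ℝ) × (Fin m → ℝ)) :
    pairIncr η (α - α') (β - β') ξ = pairIncr η α β ξ - pairIncr η α' β' ξ := by
  simp only [pairIncr, Pi.sub_apply, map_sub]
  abel

end Increment

section IncrementMartingale

variable {d m : ℕ} {γ : Measure (Fin m → ℝ)}

/-- A weight dominating the polynomials in the noise that occur in one time step. -/
noncomputable def noiseWeight (ξ : (Fin m → ℝ) × (Fin m → ℝ)) : ℝ := (1 + ‖ξ‖) ^ 6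

lemma one_le_noiseWeight (ξ : (Fin m → ℝ) × (Fin m → ℝ)) : 1 ≤ noiseWeight ξ :=
  one_le_pow₀ (le_add_of_nonneg_right (norm_nonneg ξ))

namespace IsHalfStepNoise

lemma integrable_noiseWeight_pow (hγ : IsHalfStepNoise γ) (k : ℕ) :
    Integrable (fun ξ => noiseWeight ξ ^ k) (γ.prod γ) := by
  have := hγ.isProbabilityMeasure
  have hprod := (hγ.integrable_pow (6 * k)).mul_prod (hγ.integrable_pow (6 * k))
  refine hprod.mono' (Continuous.aestronglyMeasurable (by unfold noiseWeight; fun_prop))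
    (.of_forall fun ξ => ?_)
  have hle : 1 + ‖ξ‖ ≤ (1 + ‖ξ.1‖) * (1 + ‖ξ.2‖) := by
    rw [Prod.norm_def]
    have := norm_nonneg ξ.1
    have := norm_nonneg ξ.2
    rcases max_cases ‖ξ.1‖ ‖ξ.2‖ with h | h <;> rw [h.1] <;> nlinarith
  rw [noiseWeight, ← pow_mul, Real.norm_of_nonneg (by positivity), ← mul_pow]
  gcongr

lemma integrable_apply (hγ : IsHalfStepNoise γ) (j : Fin m) : Integrable (fun ξ => ξ j) γ :=
  (hγ.integrable_pow 1).mono' (measurable_pi_apply j).aestronglyMeasurable <| .of_forall fun ξ => by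
    linarith [norm_le_pi_norm ξ j]

lemma integrable_apply_mul_apply (hγ : IsHalfStepNoise γ) (j k : Fin m) :
    Integrable (fun ξ => ξ j * ξ k) γ :=
  (hγ.integrable_pow 2).mono' (by fun_prop) <| .of_forall fun ξ => by
    rw [norm_mul, sq]
    have hj := norm_le_pi_norm ξ j
    have hk := norm_le_pi_norm ξ k
    gcongr <;> linarith

lemma integral_noisePoly (hγ : IsHalfStepNoise γ)
    (κ : (Fin d → Fin m → ℝ) × (Fin d → Fin m → Fin m → ℝ)) :
    ∫ ξ, noisePoly ξ κ ∂γ = 0 := by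
  have := hγ.isProbabilityMeasure
  have hlinear : ∀ i j, Integrable (fun ξ => κ.1 i j * ξ j) γ := fun i j =>
    (hγ.integrable_apply j).const_mul _
  have hcentred : ∀ j k, Integrable (fun ξ => ξ j * ξ k - if j = k then 1 / 2 else 0) γ :=
    fun j k => (hγ.integrable_apply_mul_apply j k).sub (integrable_const _)
  have hquadratic : ∀ i j k,
      Integrable (fun ξ => κ.2 i j k * (ξ j * ξ k - if j = k then 1 / 2 else 0)) γ :=
    fun i j k => (hcentred j k).const_mul _
  have hinner : ∀ i j, Integrable
      (fun ξ => ∑ k, κ.2 i j k * (ξ j * ξ k - if j = k then 1 / 2 else 0)) γ :=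
    fun i j => integrable_finsetSum _ fun k _ => hquadratic i j k
  have hfirst : ∀ i, Integrable (fun ξ => ∑ j, κ.1 i j * ξ j) γ := fun i =>
    integrable_finsetSum _ fun j _ => hlinear i j
  have hsecond : ∀ i, Integrable
      (fun ξ => ∑ j, ∑ k, κ.2 i j k * (ξ j * ξ k - if j = k then 1 / 2 else 0)) γ := fun i =>
    integrable_finsetSum _ fun j _ => hinner i j
  funext i
  refine (eval_integral (fun i => (hfirst i).add (hsecond i)) i).trans ?_
  refine (integral_add (hfirst i) (hsecond i)).trans ?_
  rw [integral_finsetSum _ fun j _ => hlinear i j, integral_finsetSum _ fun j _ => hinner i j]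
  simp only [integral_finsetSum _ fun k _ => hquadratic i _ k, integral_const_mul,
    integral_sub (hγ.integrable_apply_mul_apply _ _) (integrable_const _), hγ.integral_apply,
    hγ.integral_apply_mul_apply, integral_const, probReal_univ, smul_eq_mul, one_mul, sub_self,
    mul_zero, Finset.sum_const_zero, add_zero, Pi.zero_apply]

variable {A : ℝ} {η : ℝ} {α β : (Fin m → ℝ) → StepCoeff d m}

lemma integrable_noiseWeight (hγ : IsHalfStepNoise γ) : Integrable noiseWeight (γ.prod γ) := by
  simpa only [pow_one] using hγ.integrable_noiseWeight_pow 1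

/- The coefficients depend on the first half only, so the noise of the second half stays centred. -/
lemma isDriftMartingale_noisePoly (hγ : IsHalfStepNoise γ) (hβ : Continuous β)
    (hA : ∀ ζ, ‖β ζ‖ ≤ A * (1 + ‖ζ‖) ^ 4) :
    IsDriftMartingale (γ.prod γ) noiseWeight η ((m + 1) ^ 2 * A)
      fun ξ => η • noisePoly ξ.2 (β ξ.1).2 := by
  have := hγ.isProbabilityMeasure
  have hA₀ : 0 ≤ A := by simpa using (norm_nonneg _).trans (hA 0)
  have hcont : Continuous fun ξ : (Fin m → ℝ) × (Fin m → ℝ) => noisePoly ξ.2 (β ξ.1).2 :=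
    continuous_noisePoly.comp
      (by fun_prop : Continuous fun ξ : (Fin m → ℝ) × (Fin m → ℝ) => (ξ.2, (β ξ.1).2))
  have hbound : ∀ ξ : (Fin m → ℝ) × (Fin m → ℝ),
      ‖noisePoly ξ.2 (β ξ.1).2‖ ≤ (m + 1) ^ 2 * A * noiseWeight ξ := fun ξ =>
    calc ‖noisePoly ξ.2 (β ξ.1).2‖
        ≤ (m + 1) ^ 2 * (1 + ‖ξ.2‖) ^ 2 * (A * (1 + ‖ξ.1‖) ^ 4) :=
          (norm_noisePoly_le _ _).trans (by gcongr; exact (norm_snd_le _).trans (hA _))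
      _ ≤ (m + 1) ^ 2 * (1 + ‖ξ‖) ^ 2 * (A * (1 + ‖ξ‖) ^ 4) := by
          gcongr
          exacts [norm_snd_le ξ, norm_fst_le ξ]
      _ = (m + 1) ^ 2 * A * noiseWeight ξ := by rw [noiseWeight]; ring
  have hint := (hγ.integrable_noiseWeight.const_mul _).mono' hcont.aestronglyMeasurable
    (.of_forall hbound)
  refine .of_martingale hcont.aestronglyMeasurable hbound ?_
  rw [integral_prod _ hint]
  simp only [hγ.integral_noisePoly, integral_zero]

lemma isDriftMartingale_stepIncr_snd (hγ : IsHalfStepNoise γ) (hβ : Continuous β)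
    (hA : ∀ ζ, ‖β ζ‖ ≤ A * (1 + ‖ζ‖) ^ 4) :
    IsDriftMartingale (γ.prod γ) noiseWeight η ((1 + (m + 1) ^ 2) * A)
      fun ξ => stepIncr η ξ.2 (β ξ.1) := by
  have hA₀ : 0 ≤ A := by simpa using (norm_nonneg _).trans (hA 0)
  have hbound : ∀ ξ : (Fin m → ℝ) × (Fin m → ℝ),
      ‖(1 / 2 : ℝ) • (β ξ.1).1‖ ≤ A * noiseWeight ξ := fun ξ => by
    calc _ = 1 / 2 * ‖(β ξ.1).1‖ := by rw [norm_smul]; norm_num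
      _ ≤ 1 * (A * (1 + ‖ξ.1‖) ^ 4) := by
          gcongr
          exacts [by norm_num, (norm_fst_le _).trans (hA _)]
      _ ≤ 1 * (A * (1 + ‖ξ‖) ^ 6) := by
          have : 1 ≤ 1 + ‖ξ‖ := le_add_of_nonneg_right (norm_nonneg ξ)
          gcongr ?_ * (A * ?_)
          exact (pow_le_pow_left₀ (by positivity) (by gcongr; exact norm_fst_le ξ) 4).trans
            (pow_le_pow_right₀ this (by norm_num))
      _ = A * noiseWeight ξ := one_mul _
  have hdrift := IsDriftMartingale.of_drift (ν := γ.prod γ) (η := η)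
    (by fun_prop : Continuous fun ξ : (Fin m → ℝ) × (Fin m → ℝ) =>
      (1 / 2 : ℝ) • (β ξ.1).1).aestronglyMeasurable hbound
  convert hdrift.add hγ.integrable_noiseWeight (hγ.isDriftMartingale_noisePoly hβ hA) using 1
  · ring
  · funext ξ
    rw [stepIncr_apply, smul_smul, div_eq_mul_one_div]

lemma isDriftMartingale_stepIncr_fst (hγ : IsHalfStepNoise γ) (hα : Continuous α)
    (hA : ∀ ζ, ‖α ζ‖ ≤ A * (1 + ‖ζ‖) ^ 4) :
    IsDriftMartingale (γ.prod γ) noiseWeight η ((1 + (m + 1) ^ 2) * A)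
      fun ξ => stepIncr η ξ.1 (α ξ.2) := by
  have := hγ.isProbabilityMeasure
  have hswap : ∀ ξ : (Fin m → ℝ) × (Fin m → ℝ), noiseWeight ξ.swap = noiseWeight ξ := fun ξ => by
    simp only [noiseWeight, Prod.norm_def, Prod.fst_swap, Prod.snd_swap, max_comm]
  simpa only [Function.comp_def, Prod.fst_swap, Prod.snd_swap] using
    (hγ.isDriftMartingale_stepIncr_snd hα hA).comp_measurePreserving
      Measure.measurePreserving_swap hswap

lemma isDriftMartingale_pairIncr (hγ : IsHalfStepNoise γ) (hα : Continuous α) (hβ : Continuous β)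
    (hαA : ∀ ζ, ‖α ζ‖ ≤ A * (1 + ‖ζ‖) ^ 4) (hβA : ∀ ζ, ‖β ζ‖ ≤ A * (1 + ‖ζ‖) ^ 4) :
    IsDriftMartingale (γ.prod γ) noiseWeight η (2 * (1 + (m + 1) ^ 2) * A) (pairIncr η α β) := by
  convert (hγ.isDriftMartingale_stepIncr_fst hα hαA).add hγ.integrable_noiseWeight
    (hγ.isDriftMartingale_stepIncr_snd hβ hβA) using 1
  · ring
  · rfl

end IsHalfStepNoise

end IncrementMartingale

section Steps

variable {d m : ℕ} {f : (Fin d → ℝ) → Fin d → ℝ} {g : (Fin d → ℝ) → Fin d → Fin m → ℝ}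

/-- The coefficients of the Milstein scheme with steps of length `η²`, driven by normalised
noise. -/
noncomputable def stepCoeff (f : (Fin d → ℝ) → Fin d → ℝ) (g : (Fin d → ℝ) → Fin d → Fin m → ℝ)
    (η : ℝ) (x : Fin d → ℝ) : StepCoeff d m :=
  (f x, g x, η • milsteinH g x)

/-- The Milstein step of length `η² / 2` with noise `η ξ`. -/
noncomputable def halfStep (f : (Fin d → ℝ) → Fin d → ℝ) (g : (Fin d → ℝ) → Fin d → Fin m → ℝ)
    (η : ℝ) (x : Fin d → ℝ) (ξ : Fin m → ℝ) : Fin d → ℝ :=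
  x + stepIncr η ξ (stepCoeff f g η x)

/-- Two successive half steps. The antithetic path takes the same step with swapped noise. -/
noncomputable def fineStep (f : (Fin d → ℝ) → Fin d → ℝ) (g : (Fin d → ℝ) → Fin d → Fin m → ℝ)
    (η : ℝ) (x : Fin d → ℝ) (ξ : (Fin m → ℝ) × (Fin m → ℝ)) : Fin d → ℝ :=
  halfStep f g η (halfStep f g η x ξ.1) ξ.2

/-- The coefficients of either half of a coarse step; the noise `ζ` of the other half enters through
the mixed terms `hᵢⱼₖ ξⱼ ζₖ`. -/
noncomputable def coarseCoeff (f : (Fin d → ℝ) → Fin d → ℝ)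
    (g : (Fin d → ℝ) → Fin d → Fin m → ℝ) (η : ℝ) (z : Fin d → ℝ) (ζ : Fin m → ℝ) :
    StepCoeff d m :=
  stepCoeff f g η z + (0, contract ζ (η • milsteinH g z), 0)

/-- The Milstein step of length `η²` with noise `η (ξ.1 + ξ.2)`. -/
noncomputable def coarseStep (f : (Fin d → ℝ) → Fin d → ℝ)
    (g : (Fin d → ℝ) → Fin d → Fin m → ℝ) (η : ℝ) (z : Fin d → ℝ)
    (ξ : (Fin m → ℝ) × (Fin m → ℝ)) : Fin d → ℝ :=
  z + pairIncr η (coarseCoeff f g η z) (coarseCoeff f g η z) ξ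

lemma milsteinStep_eq_halfStep (η : ℝ) (x : Fin d → ℝ) (ξ : Fin m → ℝ) :
    milsteinStep f g (η ^ 2 / 2) x (η • ξ) = halfStep f g η x ξ := by
  funext i
  have hquadratic : ∀ j k, milsteinH g x i j k *
      ((η • ξ) j * (η • ξ) k - if j = k then η ^ 2 / 2 else 0) =
        η * ((η • milsteinH g x) i j k * (ξ j * ξ k - if j = k then 1 / 2 else 0)) := fun j k => by
    simp only [Pi.smul_apply, smul_eq_mul]
    split_ifs <;> ring
  have hlinear : ∀ j, g x i j * (η • ξ) j = η * (g x i j * ξ j) := fun j => by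
    simp only [Pi.smul_apply, smul_eq_mul]
    ring
  simp only [milsteinStep, hquadratic, hlinear, ← Finset.mul_sum]
  simp only [halfStep, stepIncr_apply, noisePoly_apply, stepCoeff, Pi.add_apply, smul_eq_mul,
    Pi.smul_apply (η ^ 2 / 2), Pi.smul_apply η (noisePoly _ _)]
  ring

lemma stepIncr_contract (η : ℝ) (ξ ζ : Fin m → ℝ) (c : Fin d → Fin m → Fin m → ℝ) (i : Fin d) :
    stepIncr η ξ (0, contract ζ c, 0) i = η * ∑ j, ∑ k, c i j k * (ζ j * ξ k) := by
  simp only [stepIncr_apply, noisePoly_apply, contract, Pi.add_apply, Pi.smul_apply, Pi.zero_apply,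
    smul_zero, zero_mul, Finset.sum_const_zero, add_zero, zero_add, smul_eq_mul, Finset.sum_mul,
    mul_assoc]
  rw [Finset.sum_comm]

lemma milsteinStep_eq_coarseStep (η : ℝ) (z : Fin d → ℝ) (ξ : (Fin m → ℝ) × (Fin m → ℝ)) :
    milsteinStep f g (η ^ 2) z (η • (ξ.1 + ξ.2)) = coarseStep f g η z ξ := by
  funext i
  have hquadratic : ∀ j k, milsteinH g z i j k *
      ((η • (ξ.1 + ξ.2)) j * (η • (ξ.1 + ξ.2)) k - if j = k then η ^ 2 else 0) =
        η * ((η • milsteinH g z) i j k * (ξ.1 j * ξ.1 k - if j = k then 1 / 2 else 0)) +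
        η * ((η • milsteinH g z) i j k * (ξ.2 j * ξ.2 k - if j = k then 1 / 2 else 0)) +
        η * ((η • milsteinH g z) i j k * (ξ.1 j * ξ.2 k)) +
        η * ((η • milsteinH g z) i j k * (ξ.2 j * ξ.1 k)) := fun j k => by
    simp only [Pi.smul_apply, Pi.add_apply, smul_eq_mul]
    split_ifs <;> ring
  have hlinear : ∀ j, g z i j * (η • (ξ.1 + ξ.2)) j =
      η * (g z i j * ξ.1 j) + η * (g z i j * ξ.2 j) := fun j => by
    simp only [Pi.smul_apply, Pi.add_apply, smul_eq_mul]
    ring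
  simp only [milsteinStep, hquadratic, hlinear, Finset.sum_add_distrib, ← Finset.mul_sum]
  simp only [coarseStep, pairIncr, coarseCoeff, map_add, Pi.add_apply, stepIncr_contract]
  simp only [stepIncr_apply, noisePoly_apply, stepCoeff, Pi.add_apply, smul_eq_mul,
    Pi.smul_apply (η ^ 2 / 2), Pi.smul_apply η (noisePoly _ _)]
  ring

lemma fineStep_eq_add_pairIncr (η : ℝ) (x : Fin d → ℝ) (ξ : (Fin m → ℝ) × (Fin m → ℝ)) :
    fineStep f g η x ξ = x + pairIncr η (fun _ => stepCoeff f g η x)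
      (fun ζ => stepCoeff f g η (halfStep f g η x ζ)) ξ :=
  add_assoc _ _ _

lemma fineStep_swap_eq_add_pairIncr (η : ℝ) (y : Fin d → ℝ) (ξ : (Fin m → ℝ) × (Fin m → ℝ)) :
    fineStep f g η y ξ.swap = y + pairIncr η (fun ζ => stepCoeff f g η (halfStep f g η y ζ))
      (fun _ => stepCoeff f g η y) ξ :=
  (add_assoc _ _ _).trans (congrArg (y + ·) (add_comm _ _))

end Steps

section CoefficientBounds

variable {d m : ℕ} {f : (Fin d → ℝ) → Fin d → ℝ} {g : (Fin d → ℝ) → Fin d → Fin m → ℝ} {C η : ℝ}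

/-- The growth constant of a half step driven by `m`-dimensional noise, see
`IsAdmissible.norm_halfStep_sub_le`. -/
def growthConst (m : ℕ) (C : ℝ) : ℝ := (C + (m + 1) ^ 2) * C ^ 3

lemma one_le_growthConst (m : ℕ) (hC : 1 ≤ C) : 1 ≤ growthConst m C :=
  one_le_mul_of_one_le_of_one_le (le_add_of_le_of_nonneg hC (by positivity)) (one_le_pow₀ hC)

/-- The constant `C` bounds the data of the scheme: the derivatives of the coefficients, their
values at the origin and the square root `η` of the time step. -/
structure IsAdmissible (f : (Fin d → ℝ) → Fin d → ℝ) (g : (Fin d → ℝ) → Fin d → Fin m → ℝ)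
    (C η : ℝ) : Prop where
  drift : HasBoundedDerivs f C
  diffusion : HasBoundedDerivs g C
  norm_drift_zero_le : ‖f 0‖ ≤ C
  norm_diffusion_zero_le : ‖g 0‖ ≤ C
  one_le : 1 ≤ C
  nonneg : 0 ≤ η
  le : η ≤ C

namespace IsAdmissible

lemma norm_stepCoeff_le (h : IsAdmissible f g C η) (x : Fin d → ℝ) :
    ‖stepCoeff f g η x‖ ≤ C ^ 3 * (1 + ‖x‖) := by
  have hC := h.one_le
  have hη := h.nonneg
  have hC₃ : C ≤ C ^ 3 := le_self_pow₀ hC (by norm_num)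
  refine norm_prod_le_iff.2 ⟨?_, norm_prod_le_iff.2 ⟨?_, ?_⟩⟩
  · exact (h.drift.norm_le_of_norm_zero_le h.norm_drift_zero_le x).trans (by gcongr)
  · exact (h.diffusion.norm_le_of_norm_zero_le h.norm_diffusion_zero_le x).trans (by gcongr)
  · calc ‖η • milsteinH g x‖ = η * ‖milsteinH g x‖ := by
          rw [norm_smul, Real.norm_of_nonneg hη]
      _ ≤ C * (C ^ 2 * (1 + ‖x‖)) := by
          gcongr
          exacts [h.le, norm_milsteinH_le h.diffusion h.norm_diffusion_zero_le x]
      _ = C ^ 3 * (1 + ‖x‖) := by ring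

lemma norm_stepCoeff_sub_le (h : IsAdmissible f g C η) (x y : Fin d → ℝ) :
    ‖stepCoeff f g η x - stepCoeff f g η y‖ ≤ 2 * C ^ 3 * (‖x - y‖ + η * (1 + ‖x‖)) := by
  have hC := h.one_le
  have hη := h.nonneg
  have hC₁ : C ≤ 2 * C ^ 3 := by linarith [le_self_pow₀ hC (n := 3) (by norm_num)]
  have hlip : C * ‖x - y‖ ≤ 2 * C ^ 3 * (‖x - y‖ + η * (1 + ‖x‖)) := by
    gcongr
    exact le_add_of_nonneg_right (by positivity)
  refine norm_prod_le_iff.2 ⟨(h.drift.norm_sub_le x y).trans hlip, norm_prod_le_iff.2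
    ⟨(h.diffusion.norm_sub_le x y).trans hlip, ?_⟩⟩
  have hy : ‖y‖ ≤ ‖x‖ + ‖x - y‖ := by
    linarith [norm_sub_norm_le y x, norm_sub_rev x y]
  calc ‖η • milsteinH g x - η • milsteinH g y‖
      = η * ‖milsteinH g x - milsteinH g y‖ := by
        rw [← smul_sub, norm_smul, Real.norm_of_nonneg hη]
    _ ≤ η * (C ^ 2 * (1 + ‖x‖) + C ^ 2 * (1 + (‖x‖ + ‖x - y‖))) := by
        have hx := norm_milsteinH_le h.diffusion h.norm_diffusion_zero_le x
        have hy' := norm_milsteinH_le h.diffusion h.norm_diffusion_zero_le y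
        gcongr
        exact norm_sub_le_of_le hx (hy'.trans (by gcongr))
    _ = C ^ 2 * (2 * (η * (1 + ‖x‖)) + η * ‖x - y‖) := by ring
    _ ≤ C ^ 2 * (2 * C * (η * (1 + ‖x‖)) + 2 * C * ‖x - y‖) := by
        gcongr
        · linarith
        · linarith [h.le]
    _ = 2 * C ^ 3 * (‖x - y‖ + η * (1 + ‖x‖)) := by ring

lemma norm_smul_milsteinH_sub_le (h : IsAdmissible f g C η) (x y : Fin d → ℝ) :
    ‖η • milsteinH g x - η • milsteinH g y‖ ≤ C ^ 2 * (η * (1 + ‖x‖)) * ‖x - y‖ := by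
  have hη := h.nonneg
  calc _ = η * ‖milsteinH g x - milsteinH g y‖ := by
        rw [← smul_sub, norm_smul, Real.norm_of_nonneg hη]
    _ ≤ η * (C ^ 2 * (1 + ‖x‖) * ‖x - y‖) := by
        gcongr
        exact norm_milsteinH_sub_le h.diffusion h.norm_diffusion_zero_le x y
    _ = _ := by ring

lemma norm_stepCoeff_midpoint_sub_le (h : IsAdmissible f g C η) (x y z : Fin d → ℝ) :
    ‖(1 / 2 : ℝ) • (stepCoeff f g η x + stepCoeff f g η y) - stepCoeff f g η z‖ ≤
      C ^ 2 * (‖(1 / 2 : ℝ) • (x + y) - z‖ + ‖x - y‖ ^ 2 + ‖x - z‖ ^ 2 + ‖y - z‖ ^ 2 +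
        (η * (1 + ‖z‖)) ^ 2) := by
  have hC := h.one_le
  have hC₂ : C ≤ C ^ 2 := le_self_pow₀ hC two_ne_zero
  have hmid : C * (‖x - y‖ ^ 2 + ‖(1 / 2 : ℝ) • (x + y) - z‖) ≤
      C ^ 2 * (‖(1 / 2 : ℝ) • (x + y) - z‖ + ‖x - y‖ ^ 2 + ‖x - z‖ ^ 2 + ‖y - z‖ ^ 2 +
        (η * (1 + ‖z‖)) ^ 2) := by
    gcongr ?_ * ?_
    linarith [sq_nonneg ‖x - z‖, sq_nonneg ‖y - z‖, sq_nonneg (η * (1 + ‖z‖))]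
  refine norm_prod_le_iff.2 ⟨(h.drift.norm_midpoint_sub_le_add x y z).trans hmid,
    norm_prod_le_iff.2 ⟨(h.diffusion.norm_midpoint_sub_le_add x y z).trans hmid, ?_⟩⟩
  have hlip := norm_smul_milsteinH_sub_le h z
  set θ := η * (1 + ‖z‖)
  calc ‖(1 / 2 : ℝ) • (η • milsteinH g x + η • milsteinH g y) - η • milsteinH g z‖
      = ‖(-1 / 2 : ℝ) • ((η • milsteinH g z - η • milsteinH g x) +
          (η • milsteinH g z - η • milsteinH g y))‖ := by
        congr 1
        module
    _ ≤ 1 / 2 * (C ^ 2 * θ * ‖z - x‖ + C ^ 2 * θ * ‖z - y‖) := by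
        rw [norm_smul, show ‖(-1 / 2 : ℝ)‖ = 1 / 2 by norm_num]
        gcongr
        exact norm_add_le_of_le (hlip x) (hlip y)
    _ = C ^ 2 * (1 / 2 * (θ * ‖x - z‖ + θ * ‖y - z‖)) := by
        rw [norm_sub_rev z x, norm_sub_rev z y]
        ring
    _ ≤ _ := by
        gcongr _ * ?_
        nlinarith [two_mul_le_add_sq θ ‖x - z‖, two_mul_le_add_sq θ ‖y - z‖, sq_nonneg θ,
          norm_nonneg ((1 / 2 : ℝ) • (x + y) - z), sq_nonneg ‖x - y‖]

lemma norm_halfStep_sub_le (h : IsAdmissible f g C η) (x : Fin d → ℝ) (ζ : Fin m → ℝ) :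
    ‖halfStep f g η x ζ - x‖ ≤ growthConst m C * (η * (1 + ‖x‖)) * (1 + ‖ζ‖) ^ 2 := by
  have hC := h.one_le
  have hη := h.nonneg
  rw [halfStep, add_sub_cancel_left]
  calc _ ≤ η * (η + (m + 1) ^ 2) * (1 + ‖ζ‖) ^ 2 * ‖stepCoeff f g η x‖ :=
        norm_stepIncr_le hη _ _
    _ ≤ η * (C + (m + 1) ^ 2) * (1 + ‖ζ‖) ^ 2 * (C ^ 3 * (1 + ‖x‖)) := by
        gcongr
        exacts [h.le, h.norm_stepCoeff_le x]
    _ = _ := by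
        rw [growthConst]
        ring

end IsAdmissible

end CoefficientBounds

section HalfStepExpansion

variable {d m : ℕ} {f : (Fin d → ℝ) → Fin d → ℝ} {g : (Fin d → ℝ) → Fin d → Fin m → ℝ} {C η : ℝ}

lemma continuous_contract :
    Continuous fun p : (Fin m → ℝ) × (Fin d → Fin m → Fin m → ℝ) => contract p.1 p.2 := by
  unfold contract
  fun_prop

namespace IsAdmissible

lemma continuous_stepCoeff (h : IsAdmissible f g C η) : Continuous (stepCoeff f g η) := by
  have hf := h.drift.contDiff.continuous
  have hg := h.diffusion.contDiff.continuous
  have hdg := h.diffusion.contDiff.continuous_fderiv two_ne_zero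
  have hH : Continuous (milsteinH g) :=
    continuous_pi fun i => continuous_pi fun j => continuous_pi fun k => by
      simp only [milsteinH_eq_fderiv (h.diffusion.differentiableAt _)]
      have : Continuous fun x l => g x l j := by fun_prop
      fun_prop
  exact hf.prodMk (hg.prodMk (hH.const_smul η))

lemma continuous_halfStep (h : IsAdmissible f g C η) :
    Continuous fun p : (Fin d → ℝ) × (Fin m → ℝ) => halfStep f g η p.1 p.2 := by
  have hincr : Continuous fun p : (Fin d → ℝ) × (Fin m → ℝ) =>
      stepIncr η p.2 (stepCoeff f g η p.1) :=
    (continuous_stepIncr η).comp₂ continuous_snd (h.continuous_stepCoeff.comp continuous_fst)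
  exact continuous_fst.add hincr

lemma continuous_fineStep (h : IsAdmissible f g C η) :
    Continuous fun p : (Fin d → ℝ) × (Fin m → ℝ) × (Fin m → ℝ) => fineStep f g η p.1 p.2 := by
  have hfirst : Continuous fun p : (Fin d → ℝ) × (Fin m → ℝ) × (Fin m → ℝ) =>
      halfStep f g η p.1 p.2.1 :=
    h.continuous_halfStep.comp₂ continuous_fst continuous_snd.fst
  exact h.continuous_halfStep.comp₂ hfirst continuous_snd.snd

lemma continuous_coarseCoeff (h : IsAdmissible f g C η) :
    Continuous fun p : (Fin d → ℝ) × (Fin m → ℝ) => coarseCoeff f g η p.1 p.2 := by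
  have hκ : Continuous fun p : (Fin d → ℝ) × (Fin m → ℝ) => stepCoeff f g η p.1 :=
    h.continuous_stepCoeff.comp continuous_fst
  have hcontract : Continuous fun p : (Fin d → ℝ) × (Fin m → ℝ) =>
      contract p.2 (stepCoeff f g η p.1).2.2 :=
    continuous_contract.comp₂ continuous_snd hκ.snd.snd
  exact hκ.add (continuous_const.prodMk (hcontract.prodMk continuous_const))

lemma continuous_coarseStep (h : IsAdmissible f g C η) :
    Continuous fun p : (Fin d → ℝ) × (Fin m → ℝ) × (Fin m → ℝ) => coarseStep f g η p.1 p.2 := by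
  have hfst : Continuous fun p : (Fin d → ℝ) × (Fin m → ℝ) × (Fin m → ℝ) =>
      stepIncr η p.2.1 (coarseCoeff f g η p.1 p.2.2) :=
    (continuous_stepIncr η).comp₂ continuous_snd.fst
      (h.continuous_coarseCoeff.comp₂ continuous_fst continuous_snd.snd)
  have hsnd : Continuous fun p : (Fin d → ℝ) × (Fin m → ℝ) × (Fin m → ℝ) =>
      stepIncr η p.2.2 (coarseCoeff f g η p.1 p.2.1) :=
    (continuous_stepIncr η).comp₂ continuous_snd.snd
      (h.continuous_coarseCoeff.comp₂ continuous_fst continuous_snd.fst)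
  exact continuous_fst.add (hfst.add hsnd)

lemma norm_stepCoeff_halfStep_sub_le (h : IsAdmissible f g C η) (x : Fin d → ℝ) (ζ : Fin m → ℝ) :
    ‖stepCoeff f g η (halfStep f g η x ζ) - stepCoeff f g η x‖ ≤
      4 * C ^ 3 * growthConst m C * (η * (1 + ‖x‖)) * (1 + ‖ζ‖) ^ 2 := by
  have hC := h.one_le
  have hη := h.nonneg
  have hG := one_le_growthConst m hC
  have hζ : 1 ≤ (1 + ‖ζ‖) ^ 2 := one_le_pow₀ (le_add_of_nonneg_right (norm_nonneg ζ))
  have hθ : η * (1 + ‖x‖) ≤ growthConst m C * (η * (1 + ‖x‖)) * (1 + ‖ζ‖) ^ 2 :=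
    (le_mul_of_one_le_left (by positivity) hG).trans (le_mul_of_one_le_right (by positivity) hζ)
  have hhalf := h.norm_halfStep_sub_le x ζ
  rw [norm_sub_rev] at hhalf ⊢
  calc _ ≤ 2 * C ^ 3 * (‖x - halfStep f g η x ζ‖ + η * (1 + ‖x‖)) := h.norm_stepCoeff_sub_le _ _
    _ ≤ 2 * C ^ 3 * (growthConst m C * (η * (1 + ‖x‖)) * (1 + ‖ζ‖) ^ 2 +
          growthConst m C * (η * (1 + ‖x‖)) * (1 + ‖ζ‖) ^ 2) := by gcongr
    _ = _ := by ring

lemma norm_halfStep_sub_sub_le (h : IsAdmissible f g C η) (x : Fin d → ℝ) (ζ : Fin m → ℝ) :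
    ‖halfStep f g η x ζ - x - η • fun l => ∑ j, g x l j * ζ j‖ ≤
      growthConst m C * (η * (1 + ‖x‖)) ^ 2 * (1 + ‖ζ‖) ^ 2 := by
  have hC := h.one_le
  have hη := h.nonneg
  have hsplit : halfStep f g η x ζ - x - η • (fun l => ∑ j, g x l j * ζ j) =
      (η ^ 2 / 2) • f x + η • noisePoly ζ (0, η • milsteinH g x) := by
    funext i
    simp only [halfStep, stepCoeff, stepIncr_apply, noisePoly_apply, Pi.sub_apply, Pi.add_apply,
      Pi.smul_apply, smul_eq_mul, Pi.zero_apply, zero_mul, Finset.sum_const_zero]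
    ring
  have hH : ‖((0 : Fin d → Fin m → ℝ), η • milsteinH g x)‖ ≤ η * (C ^ 2 * (1 + ‖x‖)) := by
    refine norm_prod_le_iff.2 ⟨by rw [norm_zero]; positivity, ?_⟩
    rw [norm_smul, Real.norm_of_nonneg hη]
    gcongr
    exact norm_milsteinH_le h.diffusion h.norm_diffusion_zero_le x
  have hζ : 1 ≤ (1 + ‖ζ‖) ^ 2 := one_le_pow₀ (le_add_of_nonneg_right (norm_nonneg ζ))
  rw [hsplit]
  calc _ ≤ η ^ 2 / 2 * (C * (1 + ‖x‖)) +
        η * ((m + 1) ^ 2 * (1 + ‖ζ‖) ^ 2 * (η * (C ^ 2 * (1 + ‖x‖)))) := by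
        refine norm_add_le_of_le ?_ ?_ <;> rw [norm_smul, Real.norm_of_nonneg (by positivity)] <;>
          gcongr
        · exact h.drift.norm_le_of_norm_zero_le h.norm_drift_zero_le x
        · exact (norm_noisePoly_le _ _).trans (by gcongr)
    _ = (1 / 2 * C * 1 + (m + 1) ^ 2 * C ^ 2 * (1 + ‖ζ‖) ^ 2) * (η ^ 2 * (1 + ‖x‖)) := by ring
    _ ≤ (C * C ^ 3 * (1 + ‖ζ‖) ^ 2 + (m + 1) ^ 2 * C ^ 3 * (1 + ‖ζ‖) ^ 2) *
          (η ^ 2 * (1 + ‖x‖) ^ 2) := by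
        have : 1 ≤ C ^ 3 := one_le_pow₀ hC
        gcongr
        · nlinarith
        · exact le_self_pow₀ hC (by norm_num)
        · norm_num
        · exact le_self_pow₀ (le_add_of_nonneg_right (norm_nonneg x)) two_ne_zero
    _ = _ := by
        rw [growthConst]
        ring

lemma norm_comp_halfStep_sub_le {F : Type*} [NormedAddCommGroup F] [NormedSpace ℝ F]
    {φ : (Fin d → ℝ) → F} (h : IsAdmissible f g C η) (hφ : HasBoundedDerivs φ C) (x : Fin d → ℝ)
    (ζ : Fin m → ℝ) :
    ‖φ (halfStep f g η x ζ) - φ x - η • fderiv ℝ φ x (fun l => ∑ j, g x l j * ζ j)‖ ≤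
      2 * C * growthConst m C ^ 2 * (η * (1 + ‖x‖)) ^ 2 * (1 + ‖ζ‖) ^ 4 := by
  have hC := h.one_le
  have hG := one_le_growthConst m hC
  set y := halfStep f g η x ζ
  set v : Fin d → ℝ := fun l => ∑ j, g x l j * ζ j
  set G := growthConst m C
  have hsplit : φ y - φ x - η • fderiv ℝ φ x v =
      (φ y - φ x - fderiv ℝ φ x (y - x)) + fderiv ℝ φ x (y - x - η • v) := by
    rw [map_sub _ (y - x), map_smul]
    abel
  rw [hsplit]
  calc _ ≤ C * ‖y - x‖ ^ 2 + C * ‖y - x - η • v‖ :=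
        norm_add_le_of_le (hφ.norm_taylor_le x y) (hφ.norm_fderiv_apply_le x _)
    _ ≤ C * (G * (η * (1 + ‖x‖)) * (1 + ‖ζ‖) ^ 2) ^ 2 +
          C * (G ^ 2 * (η * (1 + ‖x‖)) ^ 2 * (1 + ‖ζ‖) ^ 4) := by
        have hζ : 1 ≤ 1 + ‖ζ‖ := le_add_of_nonneg_right (norm_nonneg ζ)
        gcongr
        · exact h.norm_halfStep_sub_le x ζ
        · refine (h.norm_halfStep_sub_sub_le x ζ).trans ?_
          gcongr
          exacts [le_self_pow₀ hG two_ne_zero, by norm_num]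
    _ = _ := by ring

end IsAdmissible

end HalfStepExpansion

section SecondOrder

variable {d m : ℕ} {f : (Fin d → ℝ) → Fin d → ℝ} {g : (Fin d → ℝ) → Fin d → Fin m → ℝ} {C η : ℝ}

/-- The part of `stepCoeff (halfStep x ζ) - stepCoeff x` that is linear in the noise `ζ`. -/
noncomputable def linearCoeff (f : (Fin d → ℝ) → Fin d → ℝ)
    (g : (Fin d → ℝ) → Fin d → Fin m → ℝ) (η : ℝ) (x : Fin d → ℝ) (ζ : Fin m → ℝ) :
    StepCoeff d m :=
  (η • fderiv ℝ f x (fun l => ∑ j, g x l j * ζ j), (2 : ℝ) • contract ζ (η • milsteinH g x), 0)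

/-- The part of `stepCoeff (halfStep x ζ) - stepCoeff x` that is of second order in `η`. -/
noncomputable def remainderCoeff (f : (Fin d → ℝ) → Fin d → ℝ)
    (g : (Fin d → ℝ) → Fin d → Fin m → ℝ) (η : ℝ) (x : Fin d → ℝ) (ζ : Fin m → ℝ) :
    StepCoeff d m :=
  stepCoeff f g η (halfStep f g η x ζ) - stepCoeff f g η x - linearCoeff f g η x ζ

/-- The diffusion coefficient whose noise increment is the drift increment of `linearCoeff`. -/
noncomputable def driftNoiseCoeff (f : (Fin d → ℝ) → Fin d → ℝ)
    (g : (Fin d → ℝ) → Fin d → Fin m → ℝ) (η : ℝ) (x : Fin d → ℝ) : StepCoeff d m :=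
  (0, fun i k => η ^ 2 / 2 * fderiv ℝ f x (fun l => g x l k) i, 0)

/-- The coefficients of the increment of `(x + y) / 2 - z` in one time step, where `x`, `y` and `z`
are the fine, antithetic and coarse positions. The first order terms of the fine and antithetic
paths, which are opposite to each other, have been cancelled. -/
noncomputable def midpointCoeff (f : (Fin d → ℝ) → Fin d → ℝ)
    (g : (Fin d → ℝ) → Fin d → Fin m → ℝ) (η : ℝ) (x y z : Fin d → ℝ) (ζ : Fin m → ℝ) :
    StepCoeff d m :=
  (1 / 2 : ℝ) • (stepCoeff f g η x + stepCoeff f g η y) - stepCoeff f g η z +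
    (0, contract ζ (η • milsteinH g y - η • milsteinH g z), 0) +
    (1 / 2 : ℝ) • (remainderCoeff f g η y ζ + driftNoiseCoeff f g η x)

lemma contract_sub (ζ : Fin m → ℝ) (c c' : Fin d → Fin m → Fin m → ℝ) :
    contract ζ (c - c') = contract ζ c - contract ζ c' := by
  funext i k
  simp only [contract, Pi.sub_apply, sub_mul, Finset.sum_sub_distrib]

/-- The noise `ζ` of one half step enters the drift of the other linearly, so that its
effect there may be counted as a noise increment of its own half. -/
lemma stepIncr_drift_linearCoeff (η : ℝ) (x : Fin d → ℝ) (ξ ζ : Fin m → ℝ) :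
    stepIncr η ξ ((linearCoeff f g η x ζ).1, 0, 0) = stepIncr η ζ (driftNoiseCoeff f g η x) := by
  have hcol : (fun l => ∑ j, g x l j * ζ j) = ∑ j, ζ j • fun l => g x l j := by
    funext l
    simp [Finset.sum_apply, mul_comm]
  funext i
  simp only [stepIncr_apply, noisePoly_apply, linearCoeff, driftNoiseCoeff, hcol, map_sum, map_smul,
    Pi.add_apply, Pi.smul_apply, Pi.zero_apply, Finset.sum_apply, smul_eq_mul, Finset.mul_sum,
    zero_mul, mul_zero, Finset.sum_const_zero, add_zero, zero_add]
  exact Finset.sum_congr rfl fun j _ => by ring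

lemma midpointCoeff_add (x y z : Fin d → ℝ) (ζ : Fin m → ℝ) :
    (1 / 2 : ℝ) • (stepCoeff f g η x + stepCoeff f g η (halfStep f g η y ζ)) -
        coarseCoeff f g η z ζ + (1 / 2 : ℝ) • driftNoiseCoeff f g η x =
      midpointCoeff f g η x y z ζ + (1 / 2 : ℝ) • ((linearCoeff f g η y ζ).1, 0, 0) := by
  have hlinear : linearCoeff f g η y ζ = ((linearCoeff f g η y ζ).1, 0, 0) +
      (2 : ℝ) • ((0, contract ζ (η • milsteinH g y), 0) : StepCoeff d m) := by
    simp [linearCoeff]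
  have hcontract : ((0, contract ζ (η • milsteinH g y - η • milsteinH g z), 0) : StepCoeff d m) =
      (0, contract ζ (η • milsteinH g y), 0) - (0, contract ζ (η • milsteinH g z), 0) := by
    simp [contract_sub]
  rw [midpointCoeff, remainderCoeff, coarseCoeff, hcontract]
  linear_combination (norm := module) (1 / 2 : ℝ) • hlinear

lemma midpoint_step (η : ℝ) (x y z : Fin d → ℝ) (ξ : (Fin m → ℝ) × (Fin m → ℝ)) :
    (1 / 2 : ℝ) • (fineStep f g η x ξ + fineStep f g η y ξ.swap) - coarseStep f g η z ξ =
      ((1 / 2 : ℝ) • (x + y) - z) +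
        pairIncr η (midpointCoeff f g η x y z) (midpointCoeff f g η y x z) ξ := by
  have hhalf : ∀ (x y : Fin d → ℝ) (ξ ζ : Fin m → ℝ),
      stepIncr η ξ (midpointCoeff f g η x y z ζ) =
        (1 / 2 : ℝ) • (stepIncr η ξ (stepCoeff f g η x) +
            stepIncr η ξ (stepCoeff f g η (halfStep f g η y ζ))) -
          stepIncr η ξ (coarseCoeff f g η z ζ) +
          (1 / 2 : ℝ) • (stepIncr η ξ (driftNoiseCoeff f g η x) -
            stepIncr η ζ (driftNoiseCoeff f g η y)) := fun x y ξ ζ => by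
    rw [eq_sub_of_add_eq (midpointCoeff_add x y z ζ).symm]
    simp only [map_sub, map_add, map_smul, stepIncr_drift_linearCoeff]
    module
  rw [fineStep_eq_add_pairIncr, fineStep_swap_eq_add_pairIncr]
  simp only [coarseStep, pairIncr, hhalf]
  module

namespace IsAdmissible

lemma norm_remainderCoeff_le (h : IsAdmissible f g C η) (x : Fin d → ℝ) (ζ : Fin m → ℝ) :
    ‖remainderCoeff f g η x ζ‖ ≤
      2 * C ^ 2 * growthConst m C ^ 2 * (η * (1 + ‖x‖)) ^ 2 * (1 + ‖ζ‖) ^ 4 := by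
  have hC := h.one_le
  have hG := one_le_growthConst m hC
  have hη := h.nonneg
  have hζ : 1 ≤ 1 + ‖ζ‖ := le_add_of_nonneg_right (norm_nonneg ζ)
  have hfderiv : (2 : ℝ) • contract ζ (η • milsteinH g x) =
      η • fderiv ℝ g x (fun l => ∑ j, g x l j * ζ j) := by
    funext i k
    simp only [contract, Pi.smul_apply, smul_eq_mul, mul_assoc, ← Finset.mul_sum,
      fderiv_diffusion_apply (h.diffusion.differentiableAt x)]
    ring
  have hfirst : 2 * C * growthConst m C ^ 2 * (η * (1 + ‖x‖)) ^ 2 * (1 + ‖ζ‖) ^ 4 ≤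
      2 * C ^ 2 * growthConst m C ^ 2 * (η * (1 + ‖x‖)) ^ 2 * (1 + ‖ζ‖) ^ 4 := by
    gcongr
    exact le_self_pow₀ hC two_ne_zero
  refine norm_prod_le_iff.2
    ⟨(h.norm_comp_halfStep_sub_le h.drift x ζ).trans hfirst, norm_prod_le_iff.2 ⟨?_, ?_⟩⟩
  · change ‖g (halfStep f g η x ζ) - g x - (2 : ℝ) • contract ζ (η • milsteinH g x)‖ ≤ _
    rw [hfderiv]
    exact (h.norm_comp_halfStep_sub_le h.diffusion x ζ).trans hfirst
  · change ‖η • milsteinH g (halfStep f g η x ζ) - η • milsteinH g x - 0‖ ≤ _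
    rw [sub_zero, norm_sub_rev]
    have hhalf := h.norm_halfStep_sub_le x ζ
    rw [norm_sub_rev] at hhalf
    calc _ ≤ C ^ 2 * (η * (1 + ‖x‖)) * ‖x - halfStep f g η x ζ‖ := h.norm_smul_milsteinH_sub_le _ _
      _ ≤ C ^ 2 * (η * (1 + ‖x‖)) * (growthConst m C * (η * (1 + ‖x‖)) * (1 + ‖ζ‖) ^ 2) := by
          gcongr
      _ = C ^ 2 * growthConst m C * (η * (1 + ‖x‖)) ^ 2 * (1 + ‖ζ‖) ^ 2 := by ring
      _ ≤ _ := by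
          gcongr
          exacts [by linarith [sq_nonneg C], le_self_pow₀ hG two_ne_zero, by norm_num]

lemma norm_driftNoiseCoeff_le (h : IsAdmissible f g C η) (x : Fin d → ℝ) :
    ‖driftNoiseCoeff f g η x‖ ≤ C ^ 2 * (η * (1 + ‖x‖)) ^ 2 := by
  have hC := h.one_le
  have hx : 1 ≤ 1 + ‖x‖ := le_add_of_nonneg_right (norm_nonneg x)
  have hr : 0 ≤ C ^ 2 * (η * (1 + ‖x‖)) ^ 2 := by positivity
  have hentry : ∀ i k, ‖η ^ 2 / 2 * fderiv ℝ f x (fun l => g x l k) i‖ ≤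
      C ^ 2 * (η * (1 + ‖x‖)) ^ 2 := fun i k =>
    calc _ ≤ η ^ 2 * (C * (C * (1 + ‖x‖))) := by
          rw [norm_mul, Real.norm_of_nonneg (by positivity)]
          gcongr
          · exact half_le_self (sq_nonneg η)
          · exact (norm_le_pi_norm _ i).trans <| (h.drift.norm_fderiv_apply_le x _).trans <|
              mul_le_mul_of_nonneg_left ((norm_column_le _ k).trans
                (h.diffusion.norm_le_of_norm_zero_le h.norm_diffusion_zero_le x)) (by positivity)
      _ ≤ η ^ 2 * (C * (C * (1 + ‖x‖) ^ 2)) := by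
          gcongr
          exact le_self_pow₀ hx two_ne_zero
      _ = _ := by ring
  refine norm_prod_le_iff.2 ⟨norm_zero.trans_le hr, norm_prod_le_iff.2 ⟨?_, norm_zero.trans_le hr⟩⟩
  exact (pi_norm_le_iff_of_nonneg hr).2 fun i => (pi_norm_le_iff_of_nonneg hr).2 (hentry i)

end IsAdmissible

end SecondOrder

section StepBounds

variable {d m : ℕ} {f : (Fin d → ℝ) → Fin d → ℝ} {g : (Fin d → ℝ) → Fin d → Fin m → ℝ} {C η : ℝ}

/-- The typical size of the difference of two of the positions `x`, `y`, `z` after a further half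
step. -/
noncomputable def spread (η : ℝ) (x y z : Fin d → ℝ) : ℝ :=
  ‖x - y‖ + ‖x - z‖ + η * (1 + ‖x‖)

/-- A common constant in the bounds for the coefficients of the increments in one time step. -/
def incrConst (m : ℕ) (C : ℝ) : ℝ := (m + 8) * (C ^ 4 * growthConst m C ^ 2)

lemma mul_pow_mul_pow_le (hC : 1 ≤ C) {c t : ℝ} (hc : 0 ≤ c) (ht : 0 ≤ t) (ζ : Fin m → ℝ)
    {p q r : ℕ} (hp : p ≤ 4) (hq : q ≤ 2) (hr : r ≤ 4) :
    c * C ^ p * growthConst m C ^ q * t * (1 + ‖ζ‖) ^ r ≤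
      c * (C ^ 4 * growthConst m C ^ 2 * t * (1 + ‖ζ‖) ^ 4) := by
  have hG := one_le_growthConst m hC
  have hζ : 1 ≤ 1 + ‖ζ‖ := le_add_of_nonneg_right (norm_nonneg ζ)
  simp only [mul_assoc]
  gcongr

lemma mul_le_incrConst_mul (hC : 1 ≤ C) {c t : ℝ} (hc : c ≤ m + 8) (ht : 0 ≤ t)
    (ζ : Fin m → ℝ) :
    c * (C ^ 4 * growthConst m C ^ 2 * t * (1 + ‖ζ‖) ^ 4) ≤
      incrConst m C * t * (1 + ‖ζ‖) ^ 4 := by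
  calc _ ≤ (m + 8) * (C ^ 4 * growthConst m C ^ 2 * t * (1 + ‖ζ‖) ^ 4) := by gcongr
    _ = _ := by
        rw [incrConst]
        ring

lemma norm_sub_le_spread (hη : 0 ≤ η) (x y z : Fin d → ℝ) :
    ‖x - y‖ ≤ spread η x y z ∧ ‖x - z‖ ≤ spread η x y z ∧ ‖y - z‖ ≤ spread η x y z := by
  have hx : 0 ≤ η * (1 + ‖x‖) := by positivity
  have hyz := norm_sub_le_norm_sub_add_norm_sub y x z
  rw [norm_sub_rev y x] at hyz
  unfold spread
  refine ⟨?_, ?_, ?_⟩ <;> linarith [norm_nonneg (x - y), norm_nonneg (x - z)]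

namespace IsAdmissible

lemma mul_one_add_norm_le_mul_spread (h : IsAdmissible f g C η) (x y z : Fin d → ℝ) :
    η * (1 + ‖x‖) ≤ C * spread η x y z ∧ η * (1 + ‖y‖) ≤ C * spread η x y z ∧
      η * (1 + ‖z‖) ≤ C * spread η x y z := by
  have hη := h.nonneg
  have hbound : ∀ v, ‖x - v‖ ≤ ‖x - y‖ + ‖x - z‖ → η * (1 + ‖v‖) ≤ C * spread η x y z :=
      fun v hv => by
    have hvx : ‖v‖ ≤ ‖x‖ + ‖x - v‖ := by linarith [norm_sub_norm_le v x, norm_sub_rev x v]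
    calc η * (1 + ‖v‖) ≤ η * (1 + (‖x‖ + (‖x - y‖ + ‖x - z‖))) := by
          gcongr
          exact hvx.trans (by gcongr)
      _ = η * (‖x - y‖ + ‖x - z‖) + 1 * (η * (1 + ‖x‖)) := by ring
      _ ≤ C * (‖x - y‖ + ‖x - z‖) + C * (η * (1 + ‖x‖)) := by
          gcongr
          exacts [h.le, h.one_le]
      _ = C * spread η x y z := by
          rw [spread]
          ring
  refine ⟨hbound x ?_, hbound y ?_, hbound z ?_⟩
  · rw [sub_self, norm_zero]
    positivity
  · exact le_add_of_nonneg_right (norm_nonneg _)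
  · exact le_add_of_nonneg_left (norm_nonneg _)

lemma norm_coarseCoeff_sub_le (h : IsAdmissible f g C η) (z : Fin d → ℝ) (ζ : Fin m → ℝ) :
    ‖coarseCoeff f g η z ζ - stepCoeff f g η z‖ ≤ m * C ^ 2 * (η * (1 + ‖z‖)) * (1 + ‖ζ‖) := by
  have hη := h.nonneg
  have hr : 0 ≤ m * C ^ 2 * (η * (1 + ‖z‖)) * (1 + ‖ζ‖) := by positivity
  rw [coarseCoeff, add_sub_cancel_left]
  refine norm_prod_le_iff.2 ⟨norm_zero.trans_le hr, norm_prod_le_iff.2 ⟨?_, norm_zero.trans_le hr⟩⟩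
  calc _ ≤ m * (‖η • milsteinH g z‖ * ‖ζ‖) := norm_contract_le _ _
    _ ≤ m * (η * (C ^ 2 * (1 + ‖z‖)) * (1 + ‖ζ‖)) := by
        rw [norm_smul, Real.norm_of_nonneg hη]
        gcongr
        exacts [norm_milsteinH_le h.diffusion h.norm_diffusion_zero_le z,
          le_add_of_nonneg_left zero_le_one]
    _ = _ := by ring

lemma norm_stepCoeff_le_incrConst (h : IsAdmissible f g C η) (x : Fin d → ℝ) (ζ : Fin m → ℝ) :
    ‖stepCoeff f g η x‖ ≤ incrConst m C * (1 + ‖x‖) * (1 + ‖ζ‖) ^ 4 := by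
  have hx : 0 ≤ 1 + ‖x‖ := by positivity
  have hgrowth := mul_pow_mul_pow_le h.one_le zero_le_one hx ζ (p := 3) (q := 0) (r := 0)
    (by norm_num) (by norm_num) (by norm_num)
  refine (h.norm_stepCoeff_le x).trans <| le_trans ?_ <| hgrowth.trans <|
    mul_le_incrConst_mul h.one_le (by linarith [m.cast_nonneg (α := ℝ)]) hx ζ
  simp

lemma norm_stepCoeff_halfStep_le (h : IsAdmissible f g C η) (x : Fin d → ℝ) (ζ : Fin m → ℝ) :
    ‖stepCoeff f g η (halfStep f g η x ζ)‖ ≤ incrConst m C * (1 + ‖x‖) * (1 + ‖ζ‖) ^ 4 := by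
  have hC := h.one_le
  have hx : 0 ≤ 1 + ‖x‖ := by positivity
  have hG := one_le_growthConst m hC
  have hgrowth := mul_pow_mul_pow_le hC zero_le_one hx ζ (p := 3) (q := 0) (r := 0)
    (by norm_num) (by norm_num) (by norm_num)
  have hshift := mul_pow_mul_pow_le hC zero_le_four hx ζ (p := 4) (q := 1) (r := 2)
    le_rfl (by norm_num) (by norm_num)
  refine le_trans ?_ (mul_le_incrConst_mul hC
    (by linarith [m.cast_nonneg (α := ℝ)] : (5 : ℝ) ≤ m + 8) hx ζ)
  calc _ ≤ C ^ 3 * (1 + ‖x‖) + 4 * C ^ 3 * growthConst m C * (η * (1 + ‖x‖)) * (1 + ‖ζ‖) ^ 2 :=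
        (norm_le_norm_add_norm_sub' _ (stepCoeff f g η x)).trans <|
          add_le_add (h.norm_stepCoeff_le x) (h.norm_stepCoeff_halfStep_sub_le x ζ)
    _ ≤ C ^ 3 * (1 + ‖x‖) + 4 * C ^ 3 * growthConst m C * (C * (1 + ‖x‖)) * (1 + ‖ζ‖) ^ 2 := by
        gcongr
        exact h.le
    _ = 1 * C ^ 3 * growthConst m C ^ 0 * (1 + ‖x‖) * (1 + ‖ζ‖) ^ 0 +
          4 * C ^ 4 * growthConst m C ^ 1 * (1 + ‖x‖) * (1 + ‖ζ‖) ^ 2 := by ring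
    _ ≤ _ := by linarith

variable {t : ℝ} {x y z : Fin d → ℝ}

lemma norm_stepCoeff_sub_le_of_le (h : IsAdmissible f g C η) (ht : ‖x - y‖ ≤ t)
    (hxt : η * (1 + ‖x‖) ≤ C * t) (ζ : Fin m → ℝ) :
    ‖stepCoeff f g η x - stepCoeff f g η y‖ ≤
      4 * (C ^ 4 * growthConst m C ^ 2 * t * (1 + ‖ζ‖) ^ 4) := by
  have hC := h.one_le
  have ht₀ : 0 ≤ t := (norm_nonneg _).trans ht
  refine le_trans ?_ (mul_pow_mul_pow_le hC zero_le_four ht₀ ζ (p := 4) (q := 0) (r := 0)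
    le_rfl (by norm_num) (by norm_num))
  calc _ ≤ 2 * C ^ 3 * (‖x - y‖ + η * (1 + ‖x‖)) := h.norm_stepCoeff_sub_le x y
    _ ≤ 2 * C ^ 3 * (C * t + C * t) := by
        gcongr
        exact ht.trans (le_mul_of_one_le_left ht₀ hC)
    _ = _ := by ring

lemma norm_stepCoeff_halfStep_sub_le_of_le (h : IsAdmissible f g C η) (ht : ‖x - y‖ ≤ t)
    (hxt : η * (1 + ‖x‖) ≤ C * t) (ζ : Fin m → ℝ) :
    ‖stepCoeff f g η (halfStep f g η x ζ) - stepCoeff f g η y‖ ≤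
      8 * (C ^ 4 * growthConst m C ^ 2 * t * (1 + ‖ζ‖) ^ 4) := by
  have hC := h.one_le
  have hG := one_le_growthConst m hC
  have ht₀ : 0 ≤ t := (norm_nonneg _).trans ht
  have hshift : ‖stepCoeff f g η (halfStep f g η x ζ) - stepCoeff f g η x‖ ≤
      4 * (C ^ 4 * growthConst m C ^ 2 * t * (1 + ‖ζ‖) ^ 4) := by
    refine le_trans ?_ (mul_pow_mul_pow_le hC zero_le_four ht₀ ζ (p := 4) (q := 1) (r := 2)
      le_rfl (by norm_num) (by norm_num))
    calc _ ≤ 4 * C ^ 3 * growthConst m C * (η * (1 + ‖x‖)) * (1 + ‖ζ‖) ^ 2 :=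
          h.norm_stepCoeff_halfStep_sub_le x ζ
      _ ≤ 4 * C ^ 3 * growthConst m C * (C * t) * (1 + ‖ζ‖) ^ 2 := by gcongr
      _ = _ := by ring
  linarith [norm_sub_le_norm_sub_add_norm_sub (stepCoeff f g η (halfStep f g η x ζ))
    (stepCoeff f g η x) (stepCoeff f g η y), h.norm_stepCoeff_sub_le_of_le ht hxt ζ]

lemma norm_coarseCoeff_sub_le_of_le (h : IsAdmissible f g C η) (hzt : η * (1 + ‖z‖) ≤ C * t)
    (ζ : Fin m → ℝ) :
    ‖coarseCoeff f g η z ζ - stepCoeff f g η z‖ ≤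
      m * (C ^ 4 * growthConst m C ^ 2 * t * (1 + ‖ζ‖) ^ 4) := by
  have hC := h.one_le
  have hη := h.nonneg
  have ht₀ : 0 ≤ t := nonneg_of_mul_nonneg_right ((by positivity : 0 ≤ η * (1 + ‖z‖)).trans hzt)
    (by linarith)
  refine le_trans ?_ (mul_pow_mul_pow_le hC m.cast_nonneg ht₀ ζ (p := 3) (q := 0) (r := 1)
    (by norm_num) (by norm_num) (by norm_num))
  calc _ ≤ m * C ^ 2 * (η * (1 + ‖z‖)) * (1 + ‖ζ‖) := h.norm_coarseCoeff_sub_le z ζ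
    _ ≤ m * C ^ 2 * (C * t) * (1 + ‖ζ‖) := by gcongr
    _ = _ := by ring

lemma norm_contract_milsteinH_sub_le (h : IsAdmissible f g C η) (hyz : ‖y - z‖ ≤ t)
    (hyt : η * (1 + ‖y‖) ≤ C * t) (ζ : Fin m → ℝ) :
    ‖contract ζ (η • milsteinH g y - η • milsteinH g z)‖ ≤ m * C ^ 3 * t ^ 2 * (1 + ‖ζ‖) := by
  have hC := h.one_le
  have ht₀ : 0 ≤ t := (norm_nonneg _).trans hyz
  calc _ ≤ m * (‖η • milsteinH g y - η • milsteinH g z‖ * ‖ζ‖) := norm_contract_le _ _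
    _ ≤ m * (C ^ 2 * (C * t) * t * (1 + ‖ζ‖)) := by
        gcongr
        · exact (h.norm_smul_milsteinH_sub_le y z).trans (by gcongr)
        · exact le_add_of_nonneg_left zero_le_one
    _ = _ := by ring

lemma norm_remainderCoeff_add_driftNoiseCoeff_le (h : IsAdmissible f g C η)
    (hxt : η * (1 + ‖x‖) ≤ C * t) (hyt : η * (1 + ‖y‖) ≤ C * t) (ζ : Fin m → ℝ) :
    ‖remainderCoeff f g η y ζ + driftNoiseCoeff f g η x‖ ≤
      3 * (C ^ 4 * growthConst m C ^ 2 * t ^ 2 * (1 + ‖ζ‖) ^ 4) := by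
  have hC := h.one_le
  have hη := h.nonneg
  have hremainder : ‖remainderCoeff f g η y ζ‖ ≤
      2 * (C ^ 4 * growthConst m C ^ 2 * t ^ 2 * (1 + ‖ζ‖) ^ 4) :=
    calc _ ≤ 2 * C ^ 2 * growthConst m C ^ 2 * (C * t) ^ 2 * (1 + ‖ζ‖) ^ 4 :=
          (h.norm_remainderCoeff_le y ζ).trans (by gcongr)
      _ = _ := by ring
  have hdrift : ‖driftNoiseCoeff f g η x‖ ≤
      1 * (C ^ 4 * growthConst m C ^ 2 * t ^ 2 * (1 + ‖ζ‖) ^ 4) := by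
    refine le_trans ?_ (mul_pow_mul_pow_le hC zero_le_one (sq_nonneg t) ζ (p := 4) (q := 0)
      (r := 0) le_rfl (by norm_num) (by norm_num))
    calc _ ≤ C ^ 2 * (C * t) ^ 2 := (h.norm_driftNoiseCoeff_le x).trans (by gcongr)
      _ = _ := by ring
  linarith [norm_add_le (remainderCoeff f g η y ζ) (driftNoiseCoeff f g η x)]

lemma norm_stepCoeff_midpoint_sub_le_of_le (h : IsAdmissible f g C η) (hxy : ‖x - y‖ ≤ t)
    (hxz : ‖x - z‖ ≤ t) (hyz : ‖y - z‖ ≤ t) (hzt : η * (1 + ‖z‖) ≤ C * t) (ζ : Fin m → ℝ) :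
    ‖(1 / 2 : ℝ) • (stepCoeff f g η x + stepCoeff f g η y) - stepCoeff f g η z‖ ≤
      4 * (C ^ 4 * growthConst m C ^ 2 * (‖(1 / 2 : ℝ) • (x + y) - z‖ + t ^ 2) *
        (1 + ‖ζ‖) ^ 4) := by
  have hη := h.nonneg
  set D := ‖(1 / 2 : ℝ) • (x + y) - z‖
  have hD : 0 ≤ D := norm_nonneg _
  refine le_trans ?_ (mul_pow_mul_pow_le h.one_le zero_le_four (by positivity : 0 ≤ D + t ^ 2) ζ
    (p := 4) (q := 0) (r := 0) le_rfl (by norm_num) (by norm_num))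
  calc _ ≤ C ^ 2 * (D + t ^ 2 + t ^ 2 + t ^ 2 + (C * t) ^ 2) :=
        (h.norm_stepCoeff_midpoint_sub_le x y z).trans (by gcongr)
    _ ≤ C ^ 2 * (C ^ 2 * (4 * (D + t ^ 2))) := by
        gcongr
        nlinarith [one_le_pow₀ (n := 2) h.one_le, sq_nonneg t]
    _ = _ := by ring

lemma norm_midpointCoeff_le (h : IsAdmissible f g C η) (hxy : ‖x - y‖ ≤ t) (hxz : ‖x - z‖ ≤ t)
    (hyz : ‖y - z‖ ≤ t) (hxt : η * (1 + ‖x‖) ≤ C * t) (hyt : η * (1 + ‖y‖) ≤ C * t)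
    (hzt : η * (1 + ‖z‖) ≤ C * t) (ζ : Fin m → ℝ) :
    ‖midpointCoeff f g η x y z ζ‖ ≤
      incrConst m C * (‖(1 / 2 : ℝ) • (x + y) - z‖ + t ^ 2) * (1 + ‖ζ‖) ^ 4 := by
  have hC := h.one_le
  set T := ‖(1 / 2 : ℝ) • (x + y) - z‖ + t ^ 2
  set B := C ^ 4 * growthConst m C ^ 2 * T * (1 + ‖ζ‖) ^ 4
  have htT : t ^ 2 ≤ T := le_add_of_nonneg_left (norm_nonneg _)
  have hT : 0 ≤ T := (sq_nonneg t).trans htT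
  have hB : 0 ≤ B := by positivity
  have hfirst : ‖(1 / 2 : ℝ) • (stepCoeff f g η x + stepCoeff f g η y) - stepCoeff f g η z‖ ≤
      4 * B := h.norm_stepCoeff_midpoint_sub_le_of_le hxy hxz hyz hzt ζ
  have hcontract : ‖((0, contract ζ (η • milsteinH g y - η • milsteinH g z), 0) :
      StepCoeff d m)‖ ≤ m * B := by
    rw [Prod.norm_mk, Prod.norm_mk, norm_zero, norm_zero, max_eq_left (norm_nonneg _),
      max_eq_right (norm_nonneg _)]
    refine le_trans ?_ (mul_pow_mul_pow_le hC m.cast_nonneg hT ζ (p := 3) (q := 0) (r := 1)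
      (by norm_num) (by norm_num) (by norm_num))
    rw [pow_zero, mul_one, pow_one]
    exact (h.norm_contract_milsteinH_sub_le hyz hyt ζ).trans (by gcongr)
  have hrest : ‖(1 / 2 : ℝ) • (remainderCoeff f g η y ζ + driftNoiseCoeff f g η x)‖ ≤ 3 * B := by
    rw [norm_smul, Real.norm_of_nonneg (by norm_num)]
    have hB' : C ^ 4 * growthConst m C ^ 2 * t ^ 2 * (1 + ‖ζ‖) ^ 4 ≤ B := by
      dsimp only [B]
      gcongr
    linarith [h.norm_remainderCoeff_add_driftNoiseCoeff_le hxt hyt ζ]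
  refine le_trans ?_ (mul_le_incrConst_mul hC (by linarith : (m + 7 : ℝ) ≤ m + 8) hT ζ)
  rw [midpointCoeff]
  linarith [norm_add₃_le (a := (1 / 2 : ℝ) • (stepCoeff f g η x + stepCoeff f g η y) -
    stepCoeff f g η z) (b := ((0, contract ζ (η • milsteinH g y - η • milsteinH g z), 0) :
      StepCoeff d m)) (c := (1 / 2 : ℝ) • (remainderCoeff f g η y ζ + driftNoiseCoeff f g η x))]

end IsAdmissible

end StepBounds

section StepMartingale

variable {d m : ℕ} {f : (Fin d → ℝ) → Fin d → ℝ} {g : (Fin d → ℝ) → Fin d → Fin m → ℝ} {C η : ℝ}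
  {γ : Measure (Fin m → ℝ)}

/-- The factor between the size of the coefficients of an increment and that of the increment. -/
def stepConst (m : ℕ) (C : ℝ) : ℝ := 2 * (1 + (m + 1) ^ 2) * incrConst m C

lemma IsHalfStepNoise.isDriftMartingale_pairIncr_of_le_incrConst (hγ : IsHalfStepNoise γ)
    {α β : (Fin m → ℝ) → StepCoeff d m} {s : ℝ} (hα : Continuous α) (hβ : Continuous β)
    (hαs : ∀ ζ, ‖α ζ‖ ≤ incrConst m C * s * (1 + ‖ζ‖) ^ 4)
    (hβs : ∀ ζ, ‖β ζ‖ ≤ incrConst m C * s * (1 + ‖ζ‖) ^ 4) :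
    IsDriftMartingale (γ.prod γ) noiseWeight η (stepConst m C * s) (pairIncr η α β) := by
  rw [stepConst, mul_assoc]
  exact hγ.isDriftMartingale_pairIncr hα hβ hαs hβs

namespace IsAdmissible

lemma continuous_stepCoeff_halfStep (h : IsAdmissible f g C η) (x : Fin d → ℝ) :
    Continuous fun ζ : Fin m → ℝ => stepCoeff f g η (halfStep f g η x ζ) :=
  h.continuous_stepCoeff.comp (h.continuous_halfStep.comp (Continuous.prodMk_right x))

lemma continuous_midpointCoeff (h : IsAdmissible f g C η) (x y z : Fin d → ℝ) :
    Continuous (midpointCoeff f g η x y z) := by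
  have hcontract : ∀ c, Continuous fun ζ : Fin m → ℝ => contract (d := d) ζ c := fun c =>
    continuous_contract.comp (Continuous.prodMk_left c)
  have hlinear : Continuous (linearCoeff f g η y) := by
    have hdir : Continuous fun ζ : Fin m → ℝ => fun l => ∑ j, g y l j * ζ j := by fun_prop
    exact (((fderiv ℝ f y).continuous.comp hdir).const_smul η).prodMk
      (((hcontract _).const_smul (2 : ℝ)).prodMk continuous_const)
  have hremainder : Continuous (remainderCoeff f g η y) :=
    ((h.continuous_stepCoeff_halfStep y).sub continuous_const).sub hlinear
  exact (continuous_const.add (continuous_const.prodMk ((hcontract _).prodMk continuous_const))).add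
    ((hremainder.add continuous_const).const_smul (1 / 2 : ℝ))

lemma isDriftMartingale_fineStep_sub (h : IsAdmissible f g C η) (hγ : IsHalfStepNoise γ)
    (x : Fin d → ℝ) :
    IsDriftMartingale (γ.prod γ) noiseWeight η (stepConst m C * (1 + ‖x‖))
      fun ξ => fineStep f g η x ξ - x := by
  simp only [fineStep_eq_add_pairIncr, add_sub_cancel_left]
  exact hγ.isDriftMartingale_pairIncr_of_le_incrConst continuous_const
    (h.continuous_stepCoeff_halfStep x) (h.norm_stepCoeff_le_incrConst x)
    (h.norm_stepCoeff_halfStep_le x)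

lemma isDriftMartingale_fineStep_sub_fineStep_swap (h : IsAdmissible f g C η)
    (hγ : IsHalfStepNoise γ) (x y z : Fin d → ℝ) :
    IsDriftMartingale (γ.prod γ) noiseWeight η (stepConst m C * spread η x y z)
      fun ξ => fineStep f g η x ξ - fineStep f g η y ξ.swap - (x - y) := by
  obtain ⟨hxt, hyt, -⟩ := h.mul_one_add_norm_le_mul_spread x y z
  obtain ⟨hxy, -, -⟩ := norm_sub_le_spread h.nonneg x y z
  have hm : (8 : ℝ) ≤ m + 8 := le_add_of_nonneg_left m.cast_nonneg
  have hs : 0 ≤ spread η x y z := (norm_nonneg _).trans hxy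
  have hincr := hγ.isDriftMartingale_pairIncr_of_le_incrConst (η := η)
    (continuous_const.sub (h.continuous_stepCoeff_halfStep y))
    ((h.continuous_stepCoeff_halfStep x).sub continuous_const)
    (fun ζ => (norm_sub_rev _ _).trans_le <|
      (h.norm_stepCoeff_halfStep_sub_le_of_le ((norm_sub_rev y x).trans_le hxy) hyt ζ).trans
        (mul_le_incrConst_mul h.one_le hm hs ζ))
    (fun ζ => (h.norm_stepCoeff_halfStep_sub_le_of_le hxy hxt ζ).trans
      (mul_le_incrConst_mul h.one_le hm hs ζ))
  convert hincr using 2 with ξ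
  rw [fineStep_eq_add_pairIncr, fineStep_swap_eq_add_pairIncr, add_sub_add_comm,
    add_sub_cancel_left, ← pairIncr_sub]

lemma norm_sub_coarseCoeff_le (h : IsAdmissible f g C η) {κ : StepCoeff d m} {t : ℝ}
    {z : Fin d → ℝ} {ζ : Fin m → ℝ} (hzt : η * (1 + ‖z‖) ≤ C * t)
    (hκ : ‖κ - stepCoeff f g η z‖ ≤ 8 * (C ^ 4 * growthConst m C ^ 2 * t * (1 + ‖ζ‖) ^ 4)) :
    ‖κ - coarseCoeff f g η z ζ‖ ≤ incrConst m C * t * (1 + ‖ζ‖) ^ 4 := by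
  have hη := h.nonneg
  have ht : 0 ≤ t := nonneg_of_mul_nonneg_right
    ((by positivity : 0 ≤ η * (1 + ‖z‖)).trans hzt) (zero_lt_one.trans_le h.one_le)
  have hcoarse := h.norm_coarseCoeff_sub_le_of_le hzt ζ
  rw [norm_sub_rev] at hcoarse
  refine le_trans ?_ (mul_le_incrConst_mul h.one_le le_rfl ht ζ)
  linarith [norm_sub_le_norm_sub_add_norm_sub κ (stepCoeff f g η z) (coarseCoeff f g η z ζ)]

lemma isDriftMartingale_fineStep_sub_coarseStep (h : IsAdmissible f g C η)
    (hγ : IsHalfStepNoise γ) (x y z : Fin d → ℝ) :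
    IsDriftMartingale (γ.prod γ) noiseWeight η (stepConst m C * spread η x y z)
      fun ξ => fineStep f g η x ξ - coarseStep f g η z ξ - (x - z) := by
  obtain ⟨hxt, -, hzt⟩ := h.mul_one_add_norm_le_mul_spread x y z
  obtain ⟨-, hxz, -⟩ := norm_sub_le_spread h.nonneg x y z
  have hcoarse : Continuous (coarseCoeff f g η z) :=
    h.continuous_coarseCoeff.comp (Continuous.prodMk_right z)
  have hfirst : ∀ ζ : Fin m → ℝ, ‖stepCoeff f g η x - stepCoeff f g η z‖ ≤
      8 * (C ^ 4 * growthConst m C ^ 2 * spread η x y z * (1 + ‖ζ‖) ^ 4) := fun ζ => by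
    linarith [h.norm_stepCoeff_sub_le_of_le hxz hxt ζ,
      norm_nonneg (stepCoeff f g η x - stepCoeff f g η z)]
  have hincr := hγ.isDriftMartingale_pairIncr_of_le_incrConst (η := η)
    (continuous_const.sub hcoarse) ((h.continuous_stepCoeff_halfStep x).sub hcoarse)
    (fun ζ => h.norm_sub_coarseCoeff_le hzt (hfirst ζ))
    (fun ζ => h.norm_sub_coarseCoeff_le hzt (h.norm_stepCoeff_halfStep_sub_le_of_le hxz hxt ζ))
  convert hincr using 2 with ξ
  rw [fineStep_eq_add_pairIncr, coarseStep, add_sub_add_comm, add_sub_cancel_left, ← pairIncr_sub]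

lemma isDriftMartingale_midpoint_sub (h : IsAdmissible f g C η) (hγ : IsHalfStepNoise γ)
    (x y z : Fin d → ℝ) :
    IsDriftMartingale (γ.prod γ) noiseWeight η
      (stepConst m C * (‖(1 / 2 : ℝ) • (x + y) - z‖ + spread η x y z ^ 2))
      fun ξ => (1 / 2 : ℝ) • (fineStep f g η x ξ + fineStep f g η y ξ.swap) -
        coarseStep f g η z ξ - ((1 / 2 : ℝ) • (x + y) - z) := by
  obtain ⟨hxt, hyt, hzt⟩ := h.mul_one_add_norm_le_mul_spread x y z
  obtain ⟨hxy, hxz, hyz⟩ := norm_sub_le_spread h.nonneg x y z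
  simp only [midpoint_step, add_sub_cancel_left]
  refine hγ.isDriftMartingale_pairIncr_of_le_incrConst (h.continuous_midpointCoeff x y z)
    (h.continuous_midpointCoeff y x z) (h.norm_midpointCoeff_le hxy hxz hyz hxt hyt hzt)
    fun ζ => ?_
  rw [add_comm x y]
  exact h.norm_midpointCoeff_le ((norm_sub_rev y x).trans_le hxy) hyz hxz hyt hxt hzt ζ

end IsAdmissible

end StepMartingale

section Lyapunov

variable {d m : ℕ} {f : (Fin d → ℝ) → Fin d → ℝ} {g : (Fin d → ℝ) → Fin d → Fin m → ℝ} {C η : ℝ}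
  {γ : Measure (Fin m → ℝ)}

/-- A Lyapunov function for the joint evolution of the fine, antithetic and coarse positions. It
controls the fourth moments of the differences of the three paths and the second moment of the
coarse error of the mean of the fine and antithetic paths, which are all of order `η ^ 4`. -/
noncomputable def lyapunov (η : ℝ) (s : (Fin d → ℝ) × (Fin d → ℝ) × (Fin d → ℝ)) : ℝ :=
  η ^ 4 * (1 + powSum 4 s.1) + powSum 4 (s.1 - s.2.1) + powSum 4 (s.1 - s.2.2) +
    powSum 2 ((1 / 2 : ℝ) • (s.1 + s.2.1) - s.2.2)

/-- One time step of length `η²` of the fine, antithetic and coarse paths. -/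
noncomputable def jointStep (f : (Fin d → ℝ) → Fin d → ℝ) (g : (Fin d → ℝ) → Fin d → Fin m → ℝ)
    (η : ℝ) (s : (Fin d → ℝ) × (Fin d → ℝ) × (Fin d → ℝ)) (ξ : (Fin m → ℝ) × (Fin m → ℝ)) :
    (Fin d → ℝ) × (Fin d → ℝ) × (Fin d → ℝ) :=
  (fineStep f g η s.1 ξ, fineStep f g η s.2.1 ξ.swap, coarseStep f g η s.2.2 ξ)

lemma le_lyapunov (η : ℝ) (x y z : Fin d → ℝ) :
    0 ≤ lyapunov η (x, y, z) ∧ η ^ 4 * (1 + powSum 4 x) ≤ lyapunov η (x, y, z) ∧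
      powSum 4 (x - y) ≤ lyapunov η (x, y, z) ∧ powSum 4 (x - z) ≤ lyapunov η (x, y, z) ∧
      powSum 2 ((1 / 2 : ℝ) • (x + y) - z) ≤ lyapunov η (x, y, z) := by
  have heven : Even 4 := by decide
  have hx : 0 ≤ η ^ 4 * (1 + powSum 4 x) :=
    mul_nonneg (heven.pow_nonneg η) (by linarith [powSum_nonneg heven x])
  have hxy := powSum_nonneg heven (x - y)
  have hxz := powSum_nonneg heven (x - z)
  have hmid := powSum_nonneg even_two ((1 / 2 : ℝ) • (x + y) - z)
  simp only [lyapunov]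
  refine ⟨?_, ?_, ?_, ?_, ?_⟩ <;> linarith

lemma lyapunov_self (η : ℝ) (x : Fin d → ℝ) : lyapunov η (x, x, x) = η ^ 4 * (1 + powSum 4 x) := by
  have hmid : (1 / 2 : ℝ) • (x + x) - x = 0 := by module
  simp only [lyapunov, hmid, sub_self]
  simp [powSum]

lemma continuous_lyapunov (η : ℝ) :
    Continuous (lyapunov η : (Fin d → ℝ) × (Fin d → ℝ) × (Fin d → ℝ) → ℝ) := by
  have hfour := continuous_powSum (ι := Fin d) 4
  have htwo := continuous_powSum (ι := Fin d) 2
  unfold lyapunov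
  fun_prop

lemma spread_pow_four_le (hη : 0 ≤ η) (x y z : Fin d → ℝ) :
    spread η x y z ^ 4 ≤ 64 * lyapunov η (x, y, z) := by
  have heven : Even 4 := by decide
  have hpow := fun v : Fin d → ℝ => norm_pow_le_powSum heven four_ne_zero v
  have hmid := powSum_nonneg even_two ((1 / 2 : ℝ) • (x + y) - z)
  have hx : 0 ≤ η * (1 + ‖x‖) := by positivity
  calc spread η x y z ^ 4
      ≤ 2 ^ 3 * ((‖x - y‖ + ‖x - z‖) ^ 4 + (η * (1 + ‖x‖)) ^ 4) :=
        add_pow_le (by positivity) hx 4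
    _ ≤ 2 ^ 3 * (2 ^ 3 * (‖x - y‖ ^ 4 + ‖x - z‖ ^ 4) + η ^ 4 * (2 ^ 3 * (1 ^ 4 + ‖x‖ ^ 4))) := by
        rw [mul_pow]
        gcongr
        exacts [add_pow_le (norm_nonneg _) (norm_nonneg _) 4,
          add_pow_le zero_le_one (norm_nonneg _) 4]
    _ ≤ 2 ^ 3 * (2 ^ 3 * (powSum 4 (x - y) + powSum 4 (x - z)) +
          η ^ 4 * (2 ^ 3 * (1 ^ 4 + powSum 4 x))) := by
        gcongr
        exacts [hpow _, hpow _, hpow _]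
    _ ≤ 64 * lyapunov η (x, y, z) := by
        simp only [lyapunov]
        linarith

lemma sq_norm_midpoint_add_spread_sq_le (hη : 0 ≤ η) (x y z : Fin d → ℝ) :
    (‖(1 / 2 : ℝ) • (x + y) - z‖ + spread η x y z ^ 2) ^ 2 ≤ 130 * lyapunov η (x, y, z) := by
  obtain ⟨-, -, -, -, hmid⟩ := le_lyapunov η x y z
  have hnorm := (norm_pow_le_powSum even_two two_ne_zero _).trans hmid
  have hspread := spread_pow_four_le hη x y z
  have hadd := add_sq_le (a := ‖(1 / 2 : ℝ) • (x + y) - z‖) (b := spread η x y z ^ 2)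
  rw [← pow_mul] at hadd
  linarith

lemma stepConst_nonneg (m : ℕ) (hC : 1 ≤ C) : 0 ≤ stepConst m C := by
  have hG := one_le_growthConst m hC
  unfold stepConst incrConst
  positivity

lemma sum_moment_bounds_le_mul_lyapunov (hη : 0 ≤ η) {a K₂ K₄ : ℝ} (hK₂ : 0 ≤ K₂) (hK₄ : 0 ≤ K₄)
    (x y z : Fin d → ℝ) :
    η ^ 4 * (1 + (powSum 4 x + K₄ * η ^ 2 * (powSum 4 x + (a * (1 + ‖x‖)) ^ 4))) +
          (powSum 4 (x - y) + K₄ * η ^ 2 * (powSum 4 (x - y) + (a * spread η x y z) ^ 4)) +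
          (powSum 4 (x - z) + K₄ * η ^ 2 * (powSum 4 (x - z) + (a * spread η x y z) ^ 4)) +
        (powSum 2 ((1 / 2 : ℝ) • (x + y) - z) +
          K₂ * η ^ 2 * (powSum 2 ((1 / 2 : ℝ) • (x + y) - z) +
            (a * (‖(1 / 2 : ℝ) • (x + y) - z‖ + spread η x y z ^ 2)) ^ 2)) ≤
      (1 + (3 * K₄ * (1 + 64 * a ^ 4) + K₂ * (1 + 130 * a ^ 2)) * η ^ 2) *
        lyapunov η (x, y, z) := by
  obtain ⟨-, hx, hxy, hxz, hmid⟩ := le_lyapunov η x y z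
  set V := lyapunov η (x, y, z) with hV
  have hspread : (a * spread η x y z) ^ 4 ≤ 64 * a ^ 4 * V := by
    rw [mul_pow, mul_comm 64, mul_assoc]
    gcongr
    exact spread_pow_four_le hη x y z
  have hgrowth : η ^ 4 * (a * (1 + ‖x‖)) ^ 4 ≤ 64 * a ^ 4 * V := by
    have hle : (η * (1 + ‖x‖)) ^ 4 ≤ spread η x y z ^ 4 := by
      gcongr
      unfold spread
      linarith [norm_nonneg (x - y), norm_nonneg (x - z)]
    calc _ = a ^ 4 * (η * (1 + ‖x‖)) ^ 4 := by ring
      _ ≤ a ^ 4 * (64 * V) := by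
          gcongr
          exact hle.trans (spread_pow_four_le hη x y z)
      _ = _ := by ring
  have hsecond : (a * (‖(1 / 2 : ℝ) • (x + y) - z‖ + spread η x y z ^ 2)) ^ 2 ≤
      130 * a ^ 2 * V := by
    rw [mul_pow, mul_comm 130, mul_assoc]
    gcongr
    exact sq_norm_midpoint_add_spread_sq_le hη x y z
  have hx' : η ^ 4 * powSum 4 x ≤ V := by linarith [pow_nonneg hη 4]
  simp only [lyapunov] at hV
  linear_combination K₄ * η ^ 2 * (hx' + hgrowth + hxy + hspread + hxz + hspread) +
    K₂ * η ^ 2 * (hmid + hsecond) - hV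

lemma exists_meanLE_lyapunov_jointStep (hγ : IsHalfStepNoise γ)
    (f : (Fin d → ℝ) → Fin d → ℝ) (g : (Fin d → ℝ) → Fin d → Fin m → ℝ) (C : ℝ) :
    ∃ K, 0 ≤ K ∧ ∀ η, IsAdmissible f g C η → ∀ s, MeanLE (γ.prod γ)
      (fun ξ => lyapunov η (jointStep f g η s ξ)) ((1 + K * η ^ 2) * lyapunov η s) := by
  have := hγ.isProbabilityMeasure
  obtain ⟨K₄, hK₄, hfour⟩ := exists_meanLE_powSum_add (ι := Fin d) (ν := γ.prod γ)
    one_le_noiseWeight hγ.integrable_noiseWeight_pow C (.inr rfl)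
  obtain ⟨K₂, hK₂, htwo⟩ := exists_meanLE_powSum_add (ι := Fin d) (ν := γ.prod γ)
    one_le_noiseWeight hγ.integrable_noiseWeight_pow C (.inl rfl)
  set a := stepConst m C
  refine ⟨3 * K₄ * (1 + 64 * a ^ 4) + K₂ * (1 + 130 * a ^ 2), by positivity, ?_⟩
  rintro η h ⟨x, y, z⟩
  have hη := h.nonneg
  have ha : 0 ≤ a := stepConst_nonneg m h.one_le
  have hs : 0 ≤ spread η x y z := by unfold spread; positivity
  have hfine := hfour η _ x _ hη h.le (by positivity) (h.isDriftMartingale_fineStep_sub hγ x)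
  have hswap := hfour η _ (x - y) _ hη h.le (by positivity)
    (h.isDriftMartingale_fineStep_sub_fineStep_swap hγ x y z)
  have hcoarse := hfour η _ (x - z) _ hη h.le (by positivity)
    (h.isDriftMartingale_fineStep_sub_coarseStep hγ x y z)
  have hmid := htwo η _ ((1 / 2 : ℝ) • (x + y) - z) _ hη h.le (by positivity)
    (h.isDriftMartingale_midpoint_sub hγ x y z)
  simp only [add_sub_cancel] at hfine hswap hcoarse hmid
  exact (((((MeanLE.const 1).add hfine).const_mul (by positivity)).add hswap).add
    hcoarse |>.add hmid).mono (sum_moment_bounds_le_mul_lyapunov hη hK₂ hK₄ x y z)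

lemma HasBoundedDerivs.sq_midpoint_sub_le {P : (Fin d → ℝ) → ℝ} (hP : HasBoundedDerivs P C)
    (η : ℝ) (x y z : Fin d → ℝ) :
    (1 / 2 * (P x + P y) - P z) ^ 2 ≤ 2 * C ^ 2 * lyapunov η (x, y, z) := by
  have heven : Even 4 := by decide
  have hsum : ‖x - y‖ ^ 4 + ‖(1 / 2 : ℝ) • (x + y) - z‖ ^ 2 ≤ lyapunov η (x, y, z) := by
    have hx := mul_nonneg (heven.pow_nonneg η) (add_nonneg zero_le_one (powSum_nonneg heven x))
    simp only [lyapunov]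
    linarith [norm_pow_le_powSum heven four_ne_zero (x - y), powSum_nonneg heven (x - z),
      norm_pow_le_powSum even_two two_ne_zero ((1 / 2 : ℝ) • (x + y) - z)]
  calc (1 / 2 * (P x + P y) - P z) ^ 2
      ≤ (C * (‖x - y‖ ^ 2 + ‖(1 / 2 : ℝ) • (x + y) - z‖)) ^ 2 :=
        sq_le_sq.2 ((hP.norm_midpoint_sub_le_add x y z).trans (le_abs_self _))
    _ ≤ C ^ 2 * (2 * ((‖x - y‖ ^ 2) ^ 2 + ‖(1 / 2 : ℝ) • (x + y) - z‖ ^ 2)) := by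
        rw [mul_pow]
        gcongr
        exact add_sq_le
    _ = 2 * C ^ 2 * (‖x - y‖ ^ 4 + ‖(1 / 2 : ℝ) • (x + y) - z‖ ^ 2) := by ring
    _ ≤ _ := by gcongr

end Lyapunov

section Recursion

variable {Ω X Θ : Type*} [MeasurableSpace X] [MeasurableSpace Θ] {N : ℕ} {ξ : Fin N → Ω → Θ}
  {S : ℕ → Ω → X} {Φ : X × Θ → X} {s₀ : X}

lemma measurable_past_of_recursion (hΦ : Measurable Φ) (h₀ : ∀ ω, S 0 ω = s₀)
    (hS : ∀ (n : Fin N) ω, S (n + 1) ω = Φ (S n ω, ξ n ω)) {n : ℕ} (hn : n ≤ N) :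
    Measurable[⨆ i ∈ {i : Fin N | (i : ℕ) < n}, MeasurableSpace.comap (ξ i) inferInstance]
      (S n) := by
  induction n with
  | zero => rw [show S 0 = fun _ => s₀ from funext h₀]; exact measurable_const
  | succ n ih =>
    have hpast : Measurable[⨆ i ∈ {i : Fin N | (i : ℕ) < n + 1},
        MeasurableSpace.comap (ξ i) inferInstance] (S n) :=
      (ih (by omega)).mono (biSup_mono fun i hi => Nat.lt_succ_of_lt hi) le_rfl
    have hpresent : Measurable[⨆ i ∈ {i : Fin N | (i : ℕ) < n + 1},
        MeasurableSpace.comap (ξ i) inferInstance] (ξ ⟨n, hn⟩) :=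
      (comap_measurable _).mono
        (le_biSup (fun i => MeasurableSpace.comap (ξ i) inferInstance) (Nat.lt_succ_self n)) le_rfl
    rw [funext (hS ⟨n, hn⟩)]
    exact hΦ.comp (hpast.prodMk hpresent)

variable {ι κ E : Type*} [MeasurableSpace Ω] [MeasurableSpace E] {μ : Measure Ω} {a c : ℝ}

lemma measurable_of_recursion (hΦ : Measurable Φ) (hξ : ∀ i, Measurable (ξ i))
    (h₀ : ∀ ω, S 0 ω = s₀) (hS : ∀ (n : Fin N) ω, S (n + 1) ω = Φ (S n ω, ξ n ω)) {n : ℕ}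
    (hn : n ≤ N) : Measurable (S n) :=
  (measurable_past_of_recursion hΦ h₀ hS hn).mono (iSup₂_le fun i _ => (hξ i).comap_le) le_rfl

lemma iIndepFun_curry {U : ι → κ → Ω → E} (hU : ∀ i j, Measurable (U i j))
    (h : iIndepFun (fun (p : ι × κ) ω => U p.1 p.2 ω) μ) :
    iIndepFun (fun i ω j => U i j ω) μ := by
  have := h.isProbabilityMeasure
  have hprob (i j) : IsProbabilityMeasure (μ.map (U i j)) :=
    Measure.isProbabilityMeasure_map (hU i j).aemeasurable
  have hjoint : μ.map (fun ω (p : ι × κ) => U p.1 p.2 ω) =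
      Measure.infinitePi fun p => μ.map (U p.1 p.2) :=
    h.map_fun_eq_infinitePi_map fun p => hU p.1 p.2
  have hrow (i) : μ.map (fun ω j => U i j ω) = Measure.infinitePi fun j => μ.map (U i j) :=
    (h.precomp (g := Prod.mk i) (Prod.mk_right_injective i)).map_fun_eq_infinitePi_map (hU i)
  have hcurry : (fun ω i j => U i j ω) =
      MeasurableEquiv.curry ι κ E ∘ fun ω (p : ι × κ) => U p.1 p.2 ω := rfl
  rw [iIndepFun_iff_map_fun_eq_infinitePi_map (by fun_prop), hcurry,
    ← Measure.map_map (by fun_prop) (by fun_prop),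
    hjoint, Measure.infinitePi_map_curry fun i j => μ.map (U i j)]
  simp only [hrow]

lemma indepFun_of_notMem {U : ι → Ω → E} (hU : ∀ i, Measurable (U i)) (h : iIndepFun U μ)
    {s : Set ι} {i : ι} (hi : i ∉ s) {Z : Ω → X}
    (hZ : Measurable[⨆ k ∈ s, MeasurableSpace.comap (U k) inferInstance] Z) :
    IndepFun Z (U i) μ := by
  have hdisj := indep_iSup_of_disjoint (fun k => (hU k).comap_le) h.iIndep
    (Set.disjoint_singleton_right.2 hi)
  rw [iSup_singleton] at hdisj
  exact (IndepFun_iff_Indep _ _ _).2 (indep_of_indep_of_le_left hdisj hZ.comap_le)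

lemma MeanLE.of_indepFun [IsProbabilityMeasure μ] {Z : Ω → X} {ξ : Ω → Θ} (hZ : Measurable Z)
    (hξ : Measurable ξ) (hind : IndepFun Z ξ μ) {u : X × Θ → ℝ} (hu : Measurable u)
    (hu₀ : ∀ p, 0 ≤ u p) {v : X → ℝ} (hv : Measurable v) (ha : MeanLE μ (fun ω => v (Z ω)) a)
    (hle : ∀ x, MeanLE (μ.map ξ) (fun θ => u (x, θ)) (v x)) :
    MeanLE μ (fun ω => u (Z ω, ξ ω)) a := by
  have := Measure.isProbabilityMeasure_map hξ.aemeasurable (μ := μ)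
  have := Measure.isProbabilityMeasure_map hZ.aemeasurable (μ := μ)
  have hlaw := hind.map_prod_eq_prod_map_map hZ.aemeasurable hξ.aemeasurable
  have hvint : Integrable v (μ.map Z) :=
    (integrable_map_measure hv.aestronglyMeasurable hZ.aemeasurable).2 ha.1
  have huint : Integrable u ((μ.map Z).prod (μ.map ξ)) := by
    refine (integrable_prod_iff hu.aestronglyMeasurable).2 ⟨.of_forall fun x => (hle x).1, ?_⟩
    refine hvint.mono' hu.norm.stronglyMeasurable.integral_prod_right.aestronglyMeasurable
      (.of_forall fun x => ?_)
    simp only [Real.norm_of_nonneg (hu₀ _)]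
    rw [Real.norm_of_nonneg (integral_nonneg fun θ => hu₀ (x, θ))]
    exact (hle x).2
  have hpair := hZ.prodMk hξ
  refine ⟨?_, ?_⟩
  · rw [← hlaw] at huint
    exact (integrable_map_measure hu.aestronglyMeasurable hpair.aemeasurable).1 huint
  calc ∫ ω, u (Z ω, ξ ω) ∂μ
      = ∫ p, u p ∂(μ.map Z).prod (μ.map ξ) := by
        rw [← hlaw, integral_map hpair.aemeasurable hu.aestronglyMeasurable]
    _ = ∫ x, ∫ θ, u (x, θ) ∂μ.map ξ ∂μ.map Z := integral_prod u huint
    _ ≤ ∫ x, v x ∂μ.map Z := integral_mono huint.integral_prod_left hvint fun x => (hle x).2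
    _ = ∫ ω, v (Z ω) ∂μ := integral_map hZ.aemeasurable hv.aestronglyMeasurable
    _ ≤ a := ha.2

lemma meanLE_of_recursion [IsProbabilityMeasure μ] {ν : Measure Θ} (hΦ : Measurable Φ)
    (hξ : ∀ i, Measurable (ξ i)) (hind : iIndepFun ξ μ) (hν : ∀ i, μ.map (ξ i) = ν)
    (h₀ : ∀ ω, S 0 ω = s₀) (hS : ∀ (n : Fin N) ω, S (n + 1) ω = Φ (S n ω, ξ n ω))
    {V : X → ℝ} (hV : Measurable V) (hV₀ : ∀ x, 0 ≤ V x) (hc : 0 ≤ c)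
    (hstep : ∀ x, MeanLE ν (fun θ => V (Φ (x, θ))) (c * V x)) {n : ℕ} (hn : n ≤ N) :
    MeanLE μ (fun ω => V (S n ω)) (c ^ n * V s₀) := by
  induction n with
  | zero => simpa only [h₀, pow_zero, one_mul] using MeanLE.const (V s₀)
  | succ n ih =>
    have hpast := Nat.le_of_succ_le hn
    have hnew : IndepFun (S n) (ξ ⟨n, hn⟩) μ :=
      indepFun_of_notMem hξ hind (fun h => lt_irrefl n h)
        (measurable_past_of_recursion hΦ h₀ hS hpast)
    simp only [funext (hS ⟨n, hn⟩)]
    rw [pow_succ', mul_assoc]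
    refine MeanLE.of_indepFun (u := fun p => V (Φ p)) (measurable_of_recursion hΦ hξ h₀ hS hpast)
      (hξ _) hnew (hV.comp hΦ) (fun _ => hV₀ _) (hV.const_mul c) ((ih hpast).const_mul hc) ?_
    simpa only [hν] using hstep

end Recursion

section Increments

variable {Ω ι : Type*} [MeasurableSpace Ω] {μ : Measure Ω} {m : ℕ}
  {W : ι → Bool → Ω → Fin m → ℝ} {η : ℝ}

/-- The vectors `W n false` and `W n true` are the Brownian increments over the two halves of the
`n`-th time step, of length `η²`: all their coordinates are independent `N(0, η² / 2)` variables. -/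
structure IsBrownianIncrement (μ : Measure Ω) (η : ℝ) (W : ι → Bool → Ω → Fin m → ℝ) : Prop where
  measurable_apply (n : ι) (b : Bool) (j : Fin m) : Measurable fun ω => W n b ω j
  map_apply_eq (n : ι) (b : Bool) (j : Fin m) :
    μ.map (fun ω => W n b ω j) = gaussianReal 0 (Real.toNNReal (η ^ 2 / 2))
  iIndepFun_apply : iIndepFun (fun (q : ι × Bool × Fin m) ω => W q.1 q.2.1 ω q.2.2) μ

namespace IsBrownianIncrement

lemma measurable (h : IsBrownianIncrement μ η W) (n : ι) (b : Bool) : Measurable (W n b) :=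
  measurable_pi_lambda _ (h.measurable_apply n b)

lemma measurable_inv_smul (h : IsBrownianIncrement μ η W) (n : ι) :
    Measurable fun ω => η⁻¹ • (W n false ω, W n true ω) :=
  ((h.measurable n false).prodMk (h.measurable n true)).const_smul η⁻¹

lemma iIndepFun_inv_smul (h : IsBrownianIncrement μ η W) :
    iIndepFun (fun n ω => η⁻¹ • (W n false ω, W n true ω)) μ :=
  (iIndepFun_curry (U := fun n (p : Bool × Fin m) ω => W n p.1 ω p.2)
    (fun n p => h.measurable_apply n p.1 p.2) h.iIndepFun_apply).comp
    (fun _ w => η⁻¹ • (fun j => w (false, j), fun j => w (true, j))) fun _ => by fun_prop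

lemma map_inv_smul_half (h : IsBrownianIncrement μ η W) (hη : η ≠ 0) (n : ι) (b : Bool) :
    μ.map (fun ω => η⁻¹ • W n b ω) = halfNoise m := by
  have hcoord : iIndepFun (fun (j : Fin m) ω => η⁻¹ * W n b ω j) μ :=
    (h.iIndepFun_apply.precomp (g := fun j => (n, b, j))
      ((Prod.mk_right_injective n).comp (Prod.mk_right_injective b))).comp
      (fun _ x => η⁻¹ * x) fun _ => by fun_prop
  have hlaw (j : Fin m) : μ.map (fun ω => η⁻¹ * W n b ω j) = gaussianReal 0 (1 / 2) := by
    have hscale := gaussianReal_map_const_mul (μ := 0) (v := (η ^ 2 / 2).toNNReal) η⁻¹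
    rw [← h.map_apply_eq n b j, Measure.map_map (by fun_prop) (h.measurable_apply n b j),
      mul_zero] at hscale
    refine hscale.trans (congrArg (gaussianReal 0) (NNReal.eq ?_))
    push_cast
    rw [Real.coe_toNNReal _ (by positivity)]
    field_simp
  have hprod := hcoord.map_fun_eq_pi_map fun j =>
    ((h.measurable_apply n b j).const_mul _).aemeasurable
  simp only [hlaw] at hprod
  exact hprod

lemma map_inv_smul (h : IsBrownianIncrement μ η W) (hη : η ≠ 0) (n : ι) :
    μ.map (fun ω => η⁻¹ • (W n false ω, W n true ω)) = (halfNoise m).prod (halfNoise m) := by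
  have hrow : iIndepFun (fun (p : Bool × Fin m) ω => W n p.1 ω p.2) μ :=
    h.iIndepFun_apply.precomp (g := Prod.mk n) (Prod.mk_right_injective n)
  have hhalves : IndepFun (fun ω => η⁻¹ • W n false ω) (fun ω => η⁻¹ • W n true ω) μ :=
    ((iIndepFun_curry (h.measurable_apply n) hrow).indepFun Bool.false_ne_true).comp
      (measurable_const_smul η⁻¹) (measurable_const_smul η⁻¹)
  have hmeas (b : Bool) := ((h.measurable n b).const_smul η⁻¹).aemeasurable (μ := μ)
  have := hrow.isProbabilityMeasure
  calc μ.map (fun ω => η⁻¹ • (W n false ω, W n true ω))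
      = (μ.map fun ω => η⁻¹ • W n false ω).prod (μ.map fun ω => η⁻¹ • W n true ω) :=
        hhalves.map_prod_eq_prod_map_map (hmeas false) (hmeas true)
    _ = (halfNoise m).prod (halfNoise m) := by
        rw [h.map_inv_smul_half hη, h.map_inv_smul_half hη]

end IsBrownianIncrement

end Increments

section Variance

variable {Ω : Type*} [MeasurableSpace Ω] {μ : Measure Ω} {d m : ℕ}
  {f : (Fin d → ℝ) → Fin d → ℝ} {g : (Fin d → ℝ) → Fin d → Fin m → ℝ} {C η : ℝ}

lemma jointStep_inv_smul (hη : η ≠ 0) (s : (Fin d → ℝ) × (Fin d → ℝ) × (Fin d → ℝ))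
    (w w' : Fin m → ℝ) :
    jointStep f g η s (η⁻¹ • (w, w')) =
      (milsteinStep f g (η ^ 2 / 2) (milsteinStep f g (η ^ 2 / 2) s.1 w) w',
        milsteinStep f g (η ^ 2 / 2) (milsteinStep f g (η ^ 2 / 2) s.2.1 w') w,
        milsteinStep f g (η ^ 2) s.2.2 (w + w')) := by
  have hcoarse := milsteinStep_eq_coarseStep (f := f) (g := g) η s.2.2 (η⁻¹ • (w, w'))
  have hhalf (x : Fin d → ℝ) (v : Fin m → ℝ) :
      halfStep f g η x (η⁻¹ • v) = milsteinStep f g (η ^ 2 / 2) x v := by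
    rw [← milsteinStep_eq_halfStep, smul_inv_smul₀ hη]
  simp only [Prod.smul_mk, ← smul_add, smul_inv_smul₀ hη] at hcoarse
  simp only [jointStep, fineStep, Prod.smul_mk, Prod.swap_prod_mk, hhalf, hcoarse]

lemma exists_isAdmissible (hf : HasBoundedDerivs f C) (hg : HasBoundedDerivs g C) (η₀ : ℝ) :
    ∃ C', ∀ η, 0 ≤ η → η ≤ η₀ → IsAdmissible f g C' η := by
  refine ⟨1 + C + ‖f 0‖ + ‖g 0‖ + |η₀|, fun η hη hle => ?_⟩
  have hC := hf.nonneg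
  have hf₀ := norm_nonneg (f 0)
  have hg₀ := norm_nonneg (g 0)
  have hη₀ := abs_nonneg η₀
  have hself := le_abs_self η₀
  exact
    { drift := hf.mono (by linarith)
      diffusion := hg.mono (by linarith)
      norm_drift_zero_le := by linarith
      norm_diffusion_zero_le := by linarith
      one_le := by linarith
      nonneg := hη
      le := by linarith }

lemma IsAdmissible.continuous_jointStep (h : IsAdmissible f g C η) :
    Continuous fun p : ((Fin d → ℝ) × (Fin d → ℝ) × (Fin d → ℝ)) ×
      ((Fin m → ℝ) × (Fin m → ℝ)) => jointStep f g η p.1 p.2 := by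
  have hfine : Continuous fun p : ((Fin d → ℝ) × (Fin d → ℝ) × (Fin d → ℝ)) ×
      ((Fin m → ℝ) × (Fin m → ℝ)) => fineStep f g η p.1.1 p.2 :=
    h.continuous_fineStep.comp (continuous_fst.fst.prodMk continuous_snd)
  have hanti : Continuous fun p : ((Fin d → ℝ) × (Fin d → ℝ) × (Fin d → ℝ)) ×
      ((Fin m → ℝ) × (Fin m → ℝ)) => fineStep f g η p.1.2.1 p.2.swap :=
    h.continuous_fineStep.comp (continuous_fst.snd.fst.prodMk (continuous_swap.comp continuous_snd))
  exact hfine.prodMk (hanti.prodMk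
    (h.continuous_coarseStep.comp (continuous_fst.snd.snd.prodMk continuous_snd)))

lemma HasBoundedDerivs.variance_midpoint_sub_le [IsProbabilityMeasure μ] {P : (Fin d → ℝ) → ℝ}
    (hP : HasBoundedDerivs P C) {S : Ω → (Fin d → ℝ) × (Fin d → ℝ) × (Fin d → ℝ)}
    (hS : Measurable S) {a : ℝ} (ha : MeanLE μ (fun ω => lyapunov η (S ω)) a) :
    variance (fun ω => 1 / 2 * (P (S ω).1 + P (S ω).2.1) - P (S ω).2.2) μ ≤ 2 * C ^ 2 * a := by
  have hPm := hP.contDiff.continuous.measurable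
  have hmeas : Measurable fun ω => 1 / 2 * (P (S ω).1 + P (S ω).2.1) - P (S ω).2.2 := by
    fun_prop
  have hbound := ha.const_mul (c := 2 * C ^ 2) (by positivity)
  calc variance (fun ω => 1 / 2 * (P (S ω).1 + P (S ω).2.1) - P (S ω).2.2) μ
      ≤ ∫ ω, (1 / 2 * (P (S ω).1 + P (S ω).2.1) - P (S ω).2.2) ^ 2 ∂μ :=
        variance_le_expectation_sq hmeas.aestronglyMeasurable
    _ ≤ ∫ ω, 2 * C ^ 2 * lyapunov η (S ω) ∂μ :=
        integral_mono_of_nonneg (.of_forall fun _ => sq_nonneg _) hbound.1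
          (.of_forall fun ω => hP.sq_midpoint_sub_le η _ _ _)
    _ ≤ 2 * C ^ 2 * a := hbound.2

lemma variance_le_of_jointStep_recursion [IsProbabilityMeasure μ] (h : IsAdmissible f g C η)
    (hη : η ≠ 0) {K : ℝ} (hK : 0 ≤ K)
    (hstep : ∀ s, MeanLE ((halfNoise m).prod (halfNoise m))
      (fun ξ => lyapunov η (jointStep f g η s ξ)) ((1 + K * η ^ 2) * lyapunov η s))
    {P : (Fin d → ℝ) → ℝ} {C' : ℝ} (hP : HasBoundedDerivs P C') {N : ℕ}
    {W : Fin N → Bool → Ω → Fin m → ℝ} (hW : IsBrownianIncrement μ η W)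
    {S : ℕ → Ω → (Fin d → ℝ) × (Fin d → ℝ) × (Fin d → ℝ)} {x₀ : Fin d → ℝ}
    (hS₀ : ∀ ω, S 0 ω = (x₀, x₀, x₀))
    (hS : ∀ (n : Fin N) ω,
      S (n + 1) ω = jointStep f g η (S n ω) (η⁻¹ • (W n false ω, W n true ω))) :
    variance (fun ω => 1 / 2 * (P (S N ω).1 + P (S N ω).2.1) - P (S N ω).2.2) μ ≤
      2 * C' ^ 2 * (Real.exp (N * (K * η ^ 2)) * (η ^ 4 * (1 + powSum 4 x₀))) := by
  have hΦ := h.continuous_jointStep.measurable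
  have hξ := hW.measurable_inv_smul
  have hpow := powSum_nonneg (by decide : Even 4) x₀
  have hexp : (1 + K * η ^ 2) ^ N ≤ Real.exp (N * (K * η ^ 2)) := by
    rw [Real.exp_nat_mul, add_comm]
    gcongr
    exact Real.add_one_le_exp _
  have hmean : MeanLE μ (fun ω => lyapunov η (S N ω))
      ((1 + K * η ^ 2) ^ N * lyapunov η (x₀, x₀, x₀)) :=
    meanLE_of_recursion hΦ hξ hW.iIndepFun_inv_smul (hW.map_inv_smul hη) hS₀ hS
      (continuous_lyapunov η).measurable (fun s => (le_lyapunov η _ _ _).1) (by positivity) hstep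
      le_rfl
  rw [lyapunov_self] at hmean
  refine (hP.variance_midpoint_sub_le (measurable_of_recursion hΦ hξ hS₀ hS le_rfl) hmean).trans ?_
  gcongr

end Variance

end AntitheticMilstein

open AntitheticMilstein

/-- in the antithetic Milstein setting (fine path `Xf` on the fine grid of
spacing `Δt/2`, with `Xf (2n)` the value at coarse time `n Δt`; antithetic path `Xa` with
the two half-step Brownian increments swapped in each coarse step), for any payoff
`P : ℝ^d → ℝ` which is `C²` with uniformly bounded first and second derivatives there is
a constant `K`, independent of `N`, such that the multilevel correction variance satisfies
`Var[½(P(Xf_N) + P(Xa_N)) − P(Xc_N)] ≤ K Δt²` for every `N ≥ 1`, `Δt = T/N`. -/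
theorem antithetic_milstein_correction_variance
    {d m : ℕ} (hd : 0 < d) (hm : 0 < m) (T : ℝ) (hT : 0 < T)
    (f : (Fin d → ℝ) → Fin d → ℝ) (g : (Fin d → ℝ) → Fin d → Fin m → ℝ)
    (hf : ContDiff ℝ 2 f) (hg : ContDiff ℝ 2 g) (Cfg : ℝ)
    (hf1 : ∀ x, ‖fderiv ℝ f x‖ ≤ Cfg) (hf2 : ∀ x, ‖iteratedFDeriv ℝ 2 f x‖ ≤ Cfg)
    (hg1 : ∀ x, ‖fderiv ℝ g x‖ ≤ Cfg) (hg2 : ∀ x, ‖iteratedFDeriv ℝ 2 g x‖ ≤ Cfg)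
    (x₀ : Fin d → ℝ)
    (P : (Fin d → ℝ) → ℝ) (hP : ContDiff ℝ 2 P) (CP : ℝ)
    (hP1 : ∀ x, ‖fderiv ℝ P x‖ ≤ CP) (hP2 : ∀ x, ‖iteratedFDeriv ℝ 2 P x‖ ≤ CP) :
    ∃ K : ℝ, ∀ N : ℕ, 1 ≤ N →
      ∀ (Ω : Type) (_ : MeasurableSpace Ω) (μ : Measure Ω), IsProbabilityMeasure μ →
      ∀ (W : Fin N → Bool → Ω → Fin m → ℝ) (Xf Xa Xc : ℕ → Ω → Fin d → ℝ),
        (∀ n b j, Measurable fun ω => W n b ω j) →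
        (∀ n b j, μ.map (fun ω => W n b ω j) = gaussianReal 0 (Real.toNNReal (T / N / 2))) →
        iIndepFun
          (fun q : Fin N × Bool × Fin m => fun ω => W q.1 q.2.1 ω q.2.2) μ →
        (∀ ω, Xf 0 ω = x₀) → (∀ ω, Xa 0 ω = x₀) → (∀ ω, Xc 0 ω = x₀) →
        (∀ (n : Fin N) ω, Xf (2 * (n : ℕ) + 1) ω
            = milsteinStep f g (T / N / 2) (Xf (2 * (n : ℕ)) ω) (W n false ω)) →
        (∀ (n : Fin N) ω, Xf (2 * (n : ℕ) + 2) ω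
            = milsteinStep f g (T / N / 2) (Xf (2 * (n : ℕ) + 1) ω) (W n true ω)) →
        (∀ (n : Fin N) ω, Xa (2 * (n : ℕ) + 1) ω
            = milsteinStep f g (T / N / 2) (Xa (2 * (n : ℕ)) ω) (W n true ω)) →
        (∀ (n : Fin N) ω, Xa (2 * (n : ℕ) + 2) ω
            = milsteinStep f g (T / N / 2) (Xa (2 * (n : ℕ) + 1) ω) (W n false ω)) →
        (∀ (n : Fin N) ω, Xc ((n : ℕ) + 1) ω
            = milsteinStep f g (T / N) (Xc (n : ℕ) ω) (W n false ω + W n true ω)) →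
        variance (fun ω => 1 / 2 * (P (Xf (2 * N) ω) + P (Xa (2 * N) ω)) - P (Xc N ω)) μ
          ≤ K * (T / N) ^ 2 := by
  obtain ⟨C, hadm⟩ := exists_isAdmissible (f := f) (g := g) ⟨hf, hf1, hf2⟩ ⟨hg, hg1, hg2⟩ √T
  obtain ⟨K, hK, hstep⟩ :=
    exists_meanLE_lyapunov_jointStep (isHalfStepNoise_halfNoise m) f g C
  refine ⟨2 * CP ^ 2 * (Real.exp (K * T) * (1 + powSum 4 x₀)), ?_⟩
  intro N hN Ω _ μ _ W Xf Xa Xc hW hlaw hind hf₀ ha₀ hc₀ hf₁ hf₂ ha₁ ha₂ hc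
  have : (0 : ℝ) < N := by exact_mod_cast hN
  obtain ⟨η, hη, hηT, hηN⟩ : ∃ η, 0 < η ∧ η ≤ √T ∧ η ^ 2 = T / N :=
    ⟨√(T / N), by positivity, Real.sqrt_le_sqrt (div_le_self hT.le (by exact_mod_cast hN)),
      Real.sq_sqrt (by positivity)⟩
  let S n ω := (Xf (2 * n) ω, Xa (2 * n) ω, Xc n ω)
  have hS₀ ω : S 0 ω = (x₀, x₀, x₀) := by simp only [S, mul_zero, hf₀, ha₀, hc₀]
  have hS (n : Fin N) ω :
      S (n + 1) ω = jointStep f g η (S n ω) (η⁻¹ • (W n false ω, W n true ω)) := by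
    simp only [S, jointStep_inv_smul hη.ne', hηN, mul_add_one, hf₁, hf₂, ha₁, ha₂, hc]
  have hadmη := hadm η hη.le hηT
  refine (variance_le_of_jointStep_recursion hadmη hη.ne' hK (hstep η hadmη) ⟨hP, hP1, hP2⟩
    ⟨hW, by rwa [hηN], hind⟩ hS₀ hS).trans_eq ?_
  have htime : N * (K * η ^ 2) = K * T := by rw [hηN]; field_simp
  rw [htime, ← hηN]
  ring
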